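/- arXiv:0902.1105 — 2 statements merged into one kernel-verified Lean document; each statement's English description precedes it below -/
import Mathlib

section
/- In dimension 4, every finite set S of points on the unit sphere of EuclideanSpace ℝ (Fin 4) (i.e., ‖x‖ = 1 for all x ∈ S) such that any two distinct points of S are at Euclidean distance at least 1 has cardinality at most 24; that is, the kissing number in dimension 4 is at most 24. -/
/-! Delsarte-type bound with a quadratic cap inequality. -/
namespace Kiss4

/-- The degree nine polynomial, a nonnegative combination of Chebyshev polynomials of the second kind. -/
noncomputable def fP (t : ℝ) : ℝ :=
  1 + 4703/5000 * (2*t) + 2029/1000 * (4*t^2 - 1) + 104/125 * (8*t^3 - 4*t)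
    + 10113/10000 * (16*t^4 - 12*t^2 + 1)
    + 62/625 * (512*t^9 - 1024*t^7 + 672*t^5 - 160*t^3 + 10*t)

noncomputable def gP (u : ℝ) : ℝ := 96/125 - 29/250 * u

noncomputable def dP (u : ℝ) : ℝ :=
  (u - 27/50)^2 + (gP u)^2 * (1 - u^2) + 3 * (1-u)^2 * (1 - u^2)^2

noncomputable def eP (u v : ℝ) : ℝ :=
  (u - 27/50) * (v - 27/50) + gP u * gP v * (1/2 - u*v)
    + 3/2 * ((1-u) * (1-v)) * (3 * (1/2 - u*v)^2 - (1-u^2) * (1-v^2))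

theorem fa0 (x y t : ℝ) (hx : 0 ≤ x) (hy : 0 ≤ y) (ex : x = t - (-27/50)) (ey : y = -2/5 - t) :
    fP t ≤ 0 := by
  have e : 0 - fP t = 19881859920767328/25221004375*(x^0*y^9) + 47799602299099104/5044200875*(x^1*y^8) + 40462864384952032/1008840175*(x^2*y^7) + 2530558876241888/28824005*(x^3*y^6) + 656751307870464/5764801*(x^4*y^5) + 533450494984640/5764801*(x^5*y^4) + 273999056477600/5764801*(x^6*y^3) + 605916250628000/40353607*(x^7*y^2) + 108209845820000/40353607*(x^8*y^1) + 8536937300000/40353607*(x^9*y^0) := by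
    subst ex ey; simp only [fP]; ring
  rw [← sub_nonneg, e]; positivity

theorem fa1 (x y t : ℝ) (hx : 0 ≤ x) (hy : 0 ≤ y) (ex : x = t - (-2/5)) (ey : y = -7/25 - t) :
    fP t ≤ 0 := by
  have e : 0 - fP t = 266779290625/314928*(x^0*y^9) + 520182424375/104976*(x^1*y^8) + 165517850875/13122*(x^2*y^7) + 140222276600/6561*(x^3*y^6) + 1695275080315/52488*(x^4*y^5) + 2246232786683/52488*(x^5*y^4) + 147576230066/3645*(x^6*y^3) + 7780620083207/328050*(x^7*y^2) + 99967805847499/13122000*(x^8*y^1) + 201654541460353/196830000*(x^9*y^0) := by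
    subst ex ey; simp only [fP]; ring
  rw [← sub_nonneg, e]; positivity

theorem fa2 (x y t : ℝ) (hx : 0 ≤ x) (hy : 0 ≤ y) (ex : x = t - (-7/25)) (ey : y = -3/20 - t) :
    fP t ≤ 0 := by
  have e : 0 - fP t = 3303908007286423552/6627812108125*(x^0*y^9) + 7066569301556461568/1325562421625*(x^1*y^8) + 6496427263966646272/265112484325*(x^2*y^7) + 3344338701733818368/53022496865*(x^3*y^6) + 1058851372817738752/10604499373*(x^4*y^5) + 1067301949007477760/10604499373*(x^5*y^4) + 684319565365299200/10604499373*(x^6*y^3) + 269010894358784000/10604499373*(x^7*y^2) + 58915433412480000/10604499373*(x^8*y^1) + 5516038233600000/10604499373*(x^9*y^0) := by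
    subst ex ey; simp only [fP]; ring
  rw [← sub_nonneg, e]; positivity

theorem fa3 (x y t : ℝ) (hx : 0 ≤ x) (hy : 0 ≤ y) (ex : x = t - (-3/20)) (ey : y = 0 - t) :
    fP t ≤ 0 := by
  have e : 0 - fP t = 588377411584/4100625*(x^0*y^9) + 55391194112/54675*(x^1*y^8) + 153635833856/54675*(x^2*y^7) + 8429135872/2187*(x^3*y^6) + 6700346368/2187*(x^4*y^5) + 6503848960/2187*(x^5*y^4) + 10161664000/2187*(x^6*y^3) + 10347008000/2187*(x^7*y^2) + 5181440000/2187*(x^8*y^1) + 3020800000/6561*(x^9*y^0) := by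
    subst ex ey; simp only [fP]; ring
  rw [← sub_nonneg, e]; positivity

theorem fa4 (x y t : ℝ) (hx : 0 ≤ x) (hy : 0 ≤ y) (ex : x = t - (0)) (ey : y = 1/2 - t) :
    fP t ≤ 0 := by
  have e : 0 - fP t = 5664/625*(x^0*y^9) + 123744/625*(x^1*y^8) + 1107616/625*(x^2*y^7) + 5132896/625*(x^3*y^6) + 13429824/625*(x^4*y^5) + 812288/25*(x^5*y^4) + 17275808/625*(x^6*y^3) + 7541984/625*(x^7*y^2) + 1319264/625*(x^8*y^1) + 608/625*(x^9*y^0) := by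
    subst ex ey; simp only [fP]; ring
  rw [← sub_nonneg, e]; positivity

theorem f_nonpos (t : ℝ) (h1 : -27/50 ≤ t) (h2 : t ≤ 1/2) : fP t ≤ 0 := by
  rcases le_total t (-2/5) with k1 | k1
  · exact fa0 _ _ t (by linarith) (by linarith) rfl rfl
  rcases le_total t (-7/25) with k2 | k2
  · exact fa1 _ _ t (by linarith) (by linarith) rfl rfl
  rcases le_total t (-3/20) with k3 | k3
  · exact fa2 _ _ t (by linarith) (by linarith) rfl rfl
  rcases le_total t (0) with k4 | k4
  · exact fa3 _ _ t (by linarith) (by linarith) rfl rfl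
  exact fa4 _ _ t (by linarith) (by linarith) rfl rfl

theorem fc0 (x y u : ℝ) (hx : 0 ≤ x) (hy : 0 ≤ y) (ex : x = u - (27/50)) (ey : y = 13/20 - u) :
    fP (-u) * dP u ≤ 1329/200 * (u - 27/50)^2 := by
  have e : 1329/200 * (u - 27/50)^2 - fP (-u) * dP u = 128298225853729537181085597696/49037943386265625*(x^0*y^15) + 17123143514419817560902799982592/539417377248921875*(x^1*y^14) + 95642044036591490669057026031616/539417377248921875*(x^2*y^13) + 65108101243939092798656315129856/107883475449784375*(x^3*y^12) + 30130888940833056880205648822272/21576695089956875*(x^4*y^11) + 910413280920941406866952224768/392303547090125*(x^5*y^10) + 44802210096500596604266643456/15692141883605*(x^6*y^9) + 3777388696469230990936817664/1426558353055*(x^7*y^8) + 5897300312467460159537147904/3138428376721*(x^8*y^7) + 3277844946505346815027159040/3138428376721*(x^9*y^6) + 1495303211719296519840844800/3138428376721*(x^10*y^5) + 597735607934578431495040000/3138428376721*(x^11*y^4) + 2343200314113600689232640000/34522712143931*(x^12*y^3) + 673055967288773251155200000/34522712143931*(x^13*y^2) + 128012546131762820592000000/34522712143931*(x^14*y^1)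 + 11458088572469017440000000/34522712143931*(x^15*y^0) := by
    subst ex ey; simp only [fP, dP, gP]; ring
  rw [← sub_nonneg, e]; positivity

theorem fc1 (x y u : ℝ) (hx : 0 ≤ x) (hy : 0 ≤ y) (ex : x = u - (13/20)) (ey : y = 77/100 - u) :
    fP (-u) * dP u ≤ 1329/200 * (u - 27/50)^2 := by
  have e : 1329/200 * (u - 27/50)^2 - fP (-u) * dP u = 225655715701294126015625/2507653251072*(x^0*y^15) + 480790473870211748890625/278628139008*(x^1*y^14) + 4317113548796357478003125/278628139008*(x^2*y^13) + 213262052435692583711873125/2507653251072*(x^3*y^12) + 29464679967058518851099375/92876046336*(x^4*y^11) + 237090978350609813546218525/278628139008*(x^5*y^10) + 4253658220868159032136017865/2507653251072*(x^6*y^9) + 237942880421965595496726611/92876046336*(x^7*y^8) + 458057709254551125952464071/154793410560*(x^8*y^7) + 32805662016243940563856005463/12538266255360*(x^9*y^6) + 61219996953143931497144685427/34828517376000*(x^10*y^5) + 153518311085288916692419207799/174142586880000*(x^11*y^4) + 2504479219357062577039457914979/7836416409600000*(x^12*y^3) + 12750063865697506176004851589/161243136000000*(x^13*y^2) + 51974538175198322389377269491/4353564672000000*(x^14*y^1)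 + 32481140654612410645289282387/39182082048000000*(x^15*y^0) := by
    subst ex ey; simp only [fP, dP, gP]; ring
  rw [← sub_nonneg, e]; positivity

theorem fc2 (x y u : ℝ) (hx : 0 ≤ x) (hy : 0 ≤ y) (ex : x = u - (77/100)) (ey : y = 22/25 - u) :
    fP (-u) * dP u ≤ 1329/200 * (u - 27/50)^2 := by
  have e : 1329/200 * (u - 27/50)^2 - fP (-u) * dP u = 199564128181938651004657350985728/65269502647119546875*(x^0*y^15) + 3102983294206283651111143804879872/65269502647119546875*(x^1*y^14) + 22280992322328661429636063770589184/65269502647119546875*(x^2*y^13) + 97926113559893088146031342344718336/65269502647119546875*(x^3*y^12) + 294301777803598636458566298236453888/65269502647119546875*(x^4*y^11) + 58165257556612633491737712989961216/5933591149738140625*(x^5*y^10) + 94344531763267975082948656366411776/5933591149738140625*(x^6*y^9) + 116022518823022490169399139417915392/5933591149738140625*(x^7*y^8) + 108785672386216040982933268984086528/5933591149738140625*(x^8*y^7) + 77508926966403462260651355569291264/5933591149738140625*(x^9*y^6) + 41440759492314607987723440060104704/5933591149738140625*(x^10*y^5) + 178578002479754802826570969018990592/65269502647119546875*(x^11*y^4)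 + 49244832877245174760742449529749504/65269502647119546875*(x^12*y^3) + 8938129011011941119839804620537856/65269502647119546875*(x^13*y^2) + 944957251718542241418764204638208/65269502647119546875*(x^14*y^1) + 43759291577202440245449852977152/65269502647119546875*(x^15*y^0) := by
    subst ex ey; simp only [fP, dP, gP]; ring
  rw [← sub_nonneg, e]; positivity

theorem fc3 (x y u : ℝ) (hx : 0 ≤ x) (hy : 0 ≤ y) (ex : x = u - (22/25)) (ey : y = 47/50 - u) :
    fP (-u) * dP u ≤ 1329/200 * (u - 27/50)^2 := by
  have e : 1329/200 * (u - 27/50)^2 - fP (-u) * dP u = 1335427599401929939131160064/224201671875*(x^0*y^15) + 1691991892150067821179670016/24911296875*(x^1*y^14) + 25242105434832579458056024448/74733890625*(x^2*y^13) + 8425201909893568921370687872/8968066875*(x^3*y^12) + 38064926333518447875237316576/24911296875*(x^4*y^11) + 97314882540329994783939299744/74733890625*(x^5*y^10) + 74108828039377436245442025824/224201671875*(x^6*y^9) + 1454235821827251247186800544/2767921875*(x^7*y^8) + 17696929827496184951558644928/4982259375*(x^8*y^7) + 1745600314936439214861049876544/224201671875*(x^9*y^6) + 237782404073943693589432292576/24911296875*(x^10*y^5)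 + 562554870373141050404534031392/74733890625*(x^11*y^4) + 884028062296270664780519905696/224201671875*(x^12*y^3) + 6666561469293724202355760544/4982259375*(x^13*y^2) + 20029251755302681092012987392/74733890625*(x^14*y^1) + 5418289270176318799849251392/224201671875*(x^15*y^0) := by
    subst ex ey; simp only [fP, dP, gP]; ring
  rw [← sub_nonneg, e]; positivity

theorem fc4 (x y u : ℝ) (hx : 0 ≤ x) (hy : 0 ≤ y) (ex : x = u - (47/50)) (ey : y = 1 - u) :
    fP (-u) * dP u ≤ 1329/200 * (u - 27/50)^2 := by
  have e : 1329/200 * (u - 27/50)^2 - fP (-u) * dP u = 5418289270176318799849251392/224201671875*(x^0*y^15) + 11384546982153502302159842176/24911296875*(x^1*y^14) + 297739870715615424437867956064/74733890625*(x^2*y^13) + 190659155337146373237952510624/8968066875*(x^3*y^12) + 1032853835331519737270411552/13286025*(x^4*y^11) + 987835255643914981080743456/4782969*(x^5*y^10) + 5914361756583556513685652800/14348907*(x^6*y^9) + 334667065657148430135160000/531441*(x^7*y^8) + 1184760850802234765018500000/1594323*(x^8*y^7) + 9724430323042659143037500000/14348907*(x^9*y^6) + 755759619079986734687500000/1594323*(x^10*y^5)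 + 1195027574802357945312500000/4782969*(x^11*y^4) + 1378937907761230468750000000/14348907*(x^12*y^3) + 13538257277910156250000000/531441*(x^13*y^2) + 19911173023437500000000000/4782969*(x^14*y^1) + 4537698974609375000000000/14348907*(x^15*y^0) := by
    subst ex ey; simp only [fP, dP, gP]; ring
  rw [← sub_nonneg, e]; positivity

theorem f_cap (u : ℝ) (h1 : 27/50 ≤ u) (h2 : u ≤ 1) : fP (-u) * dP u ≤ 1329/200 * (u - 27/50)^2 := by
  rcases le_total u (13/20) with k1 | k1
  · exact fc0 _ _ u (by linarith) (by linarith) rfl rfl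
  rcases le_total u (77/100) with k2 | k2
  · exact fc1 _ _ u (by linarith) (by linarith) rfl rfl
  rcases le_total u (22/25) with k3 | k3
  · exact fc2 _ _ u (by linarith) (by linarith) rfl rfl
  rcases le_total u (47/50) with k4 | k4
  · exact fc3 _ _ u (by linarith) (by linarith) rfl rfl
  exact fc4 _ _ u (by linarith) (by linarith) rfl rfl

theorem eb0 (x y z w u v : ℝ) (hx : 0 ≤ x) (hy : 0 ≤ y) (hz : 0 ≤ z) (hw : 0 ≤ w)
    (ex : x = u - 27/50) (ey : y = 77/100 - u) (ez : z = v - 27/50) (ew : w = 77/100 - v) :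
    eP u v ≤ 0 := by
  have e : 0 - eP u v = 356015491584/3700897225*(x^0*y^3*(z^0*w^3)) + 1072860415968/3700897225*(x^1*y^2*(z^0*w^3)) + 87334157376/740179445*(x^2*y^1*(z^0*w^3)) + 52109065896/3700897225*(x^3*y^0*(z^0*w^3)) + 1072860415968/3700897225*(x^0*y^3*(z^1*w^2)) + 3629032310736/3700897225*(x^1*y^2*(z^1*w^2)) + 407302013592/740179445*(x^2*y^1*(z^1*w^2)) + 415314938292/3700897225*(x^3*y^0*(z^1*w^2)) + 87334157376/740179445*(x^0*y^3*(z^2*w^1)) + 407302013592/740179445*(x^1*y^2*(z^2*w^1)) + 36606248992/148035889*(x^2*y^1*(z^2*w^1)) + 31698373754/740179445*(x^3*y^0*(z^2*w^1)) + 52109065896/3700897225*(x^0*y^3*(z^3*w^0)) + 415314938292/3700897225*(x^1*y^2*(z^3*w^0)) + 31698373754/740179445*(x^2*y^1*(z^3*w^0)) + 24664668049/3700897225*(x^3*y^0*(z^3*w^0)) := by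
    subst ex ey ez ew; simp only [eP, gP]; ring
  rw [← sub_nonneg, e]; positivity

theorem eb1 (x y z w u v : ℝ) (hx : 0 ≤ x) (hy : 0 ≤ y) (hz : 0 ≤ z) (hw : 0 ≤ w)
    (ex : x = u - 77/100) (ey : y = 83/100 - u) (ez : z = v - 27/50) (ew : w = 77/100 - v) :
    eP u v ≤ 0 := by
  have e : 0 - eP u v = 2171211079/2737575*(x^0*y^3*(z^0*w^3)) + 1155473437/912525*(x^1*y^2*(z^0*w^3)) + 476074207/912525*(x^2*y^1*(z^0*w^3)) + 378805189/2737575*(x^3*y^0*(z^0*w^3)) + 34609578191/5475150*(x^0*y^3*(z^1*w^2)) + 28880844473/1825050*(x^1*y^2*(z^1*w^2)) + 24668097503/1825050*(x^2*y^1*(z^1*w^2)) + 23354552681/5475150*(x^3*y^0*(z^1*w^2)) + 15849186877/6570180*(x^0*y^3*(z^2*w^1)) + 4008625717/730020*(x^1*y^2*(z^2*w^1)) + 9748896101/2190060*(x^2*y^1*(z^2*w^1)) + 10515126967/6570180*(x^3*y^0*(z^2*w^1)) + 24664668049/65701800*(x^0*y^3*(z^3*w^0)) + 1924114183/2433400*(x^1*y^2*(z^3*w^0))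 + 13878465617/21900600*(x^2*y^1*(z^3*w^0)) + 18421127359/65701800*(x^3*y^0*(z^3*w^0)) := by
    subst ex ey ez ew; simp only [eP, gP]; ring
  rw [← sub_nonneg, e]; positivity

theorem eb2 (x y z w u v : ℝ) (hx : 0 ≤ x) (hy : 0 ≤ y) (hz : 0 ≤ z) (hw : 0 ≤ w)
    (ex : x = u - 77/100) (ey : y = 83/100 - u) (ez : z = v - 77/100) (ew : w = 83/100 - v) :
    eP u v ≤ 0 := by
  have e : 0 - eP u v = 24664668049/1166400*(x^0*y^3*(z^0*w^3)) + 1924114183/43200*(x^1*y^2*(z^0*w^3)) + 13878465617/388800*(x^2*y^1*(z^0*w^3)) + 18421127359/1166400*(x^3*y^0*(z^0*w^3)) + 1924114183/43200*(x^0*y^3*(z^1*w^2)) + 3792409547/43200*(x^1*y^2*(z^1*w^2)) + 3007211317/43200*(x^2*y^1*(z^1*w^2)) + 57954939/1600*(x^3*y^0*(z^1*w^2)) + 13878465617/388800*(x^0*y^3*(z^2*w^1)) + 3007211317/43200*(x^1*y^2*(z^2*w^1)) + 7401278161/129600*(x^2*y^1*(z^2*w^1)) + 12585399647/388800*(x^3*y^0*(z^2*w^1))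 + 18421127359/1166400*(x^0*y^3*(z^3*w^0)) + 57954939/1600*(x^1*y^2*(z^3*w^0)) + 12585399647/388800*(x^2*y^1*(z^3*w^0)) + 17202406369/1166400*(x^3*y^0*(z^3*w^0)) := by
    subst ex ey ez ew; simp only [eP, gP]; ring
  rw [← sub_nonneg, e]; positivity

theorem eb3 (x y z w u v : ℝ) (hx : 0 ≤ x) (hy : 0 ≤ y) (hz : 0 ≤ z) (hw : 0 ≤ w)
    (ex : x = u - 83/100) (ey : y = 22/25 - u) (ez : z = v - 27/50) (ew : w = 77/100 - v) :
    eP u v ≤ 0 := by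
  have e : 0 - eP u v = 9091324536/38021875*(x^0*y^3*(z^0*w^3)) + 21437832528/38021875*(x^1*y^2*(z^0*w^3)) + 44708202048/38021875*(x^2*y^1*(z^0*w^3)) + 35775469056/38021875*(x^3*y^0*(z^0*w^3)) + 280254632172/38021875*(x^0*y^3*(z^1*w^2)) + 801357551856/38021875*(x^1*y^2*(z^1*w^2)) + 834431260896/38021875*(x^2*y^1*(z^1*w^2)) + 322934003712/38021875*(x^3*y^0*(z^1*w^2)) + 21030253934/7604375*(x^0*y^3*(z^2*w^1)) + 66921916132/7604375*(x^1*y^2*(z^2*w^1)) + 83433120112/7604375*(x^2*y^1*(z^2*w^1)) + 39273961664/7604375*(x^3*y^0*(z^2*w^1)) + 18421127359/38021875*(x^0*y^3*(z^3*w^0)) + 66620036432/38021875*(x^1*y^2*(z^3*w^0)) + 94604240312/38021875*(x^2*y^1*(z^3*w^0)) + 48761896864/38021875*(x^3*y^0*(z^3*w^0)) := by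
    subst ex ey ez ew; simp only [eP, gP]; ring
  rw [← sub_nonneg, e]; positivity

theorem eb4 (x y z w u v : ℝ) (hx : 0 ≤ x) (hy : 0 ≤ y) (hz : 0 ≤ z) (hw : 0 ≤ w)
    (ex : x = u - 83/100) (ey : y = 22/25 - u) (ez : z = v - 77/100) (ew : w = 22/25 - v) :
    eP u v ≤ 0 := by
  have e : 0 - eP u v = 18421127359/4159375*(x^0*y^3*(z^0*w^3)) + 66620036432/4159375*(x^1*y^2*(z^0*w^3)) + 94604240312/4159375*(x^2*y^1*(z^0*w^3)) + 48761896864/4159375*(x^3*y^0*(z^0*w^3)) + 31403957576/4159375*(x^0*y^3*(z^1*w^2)) + 135414709948/4159375*(x^1*y^2*(z^1*w^2)) + 220035256768/4159375*(x^2*y^1*(z^1*w^2)) + 122332416896/4159375*(x^3*y^0*(z^1*w^2)) + 36185501816/4159375*(x^0*y^3*(z^2*w^1)) + 146908475968/4159375*(x^1*y^2*(z^2*w^1)) + 221198145088/4159375*(x^2*y^1*(z^2*w^1)) + 115872695936/4159375*(x^3*y^0*(z^2*w^1)) + 43378601824/4159375*(x^0*y^3*(z^3*w^0)) + 134116026752/4159375*(x^1*y^2*(z^3*w^0))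 + 146871938432/4159375*(x^2*y^1*(z^3*w^0)) + 57568213504/4159375*(x^3*y^0*(z^3*w^0)) := by
    subst ex ey ez ew; simp only [eP, gP]; ring
  rw [← sub_nonneg, e]; positivity

theorem eb5 (x y z w u v : ℝ) (hx : 0 ≤ x) (hy : 0 ≤ y) (hz : 0 ≤ z) (hw : 0 ≤ w)
    (ex : x = u - 22/25) (ey : y = 1 - u) (ez : z = v - 27/50) (ew : w = 77/100 - v) :
    eP u v ≤ 0 := by
  have e : 0 - eP u v = 186330568/2737575*(x^0*y^3*(z^0*w^3)) + 447239756/912525*(x^1*y^2*(z^0*w^3)) + 14688364/12167*(x^2*y^1*(z^0*w^3)) + 95811400/109503*(x^3*y^0*(z^0*w^3)) + 186883104/304175*(x^0*y^3*(z^1*w^2)) + 747275354/304175*(x^1*y^2*(z^1*w^2)) + 50862328/12167*(x^2*y^1*(z^1*w^2)) + 31520450/12167*(x^3*y^0*(z^1*w^2)) + 613655651/1642545*(x^0*y^3*(z^2*w^1)) + 347838404/182505*(x^1*y^2*(z^2*w^1)) + 401940320/109503*(x^2*y^1*(z^2*w^1)) + 777287125/328509*(x^3*y^0*(z^2*w^1))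 + 1523809277/16425450*(x^0*y^3*(z^3*w^0)) + 156435863/304175*(x^1*y^2*(z^3*w^0)) + 221188663/219006*(x^2*y^1*(z^3*w^0)) + 213669175/328509*(x^3*y^0*(z^3*w^0)) := by
    subst ex ey ez ew; simp only [eP, gP]; ring
  rw [← sub_nonneg, e]; positivity

theorem eb6 (x y z w u v : ℝ) (hx : 0 ≤ x) (hy : 0 ≤ y) (hz : 0 ≤ z) (hw : 0 ≤ w)
    (ex : x = u - 22/25) (ey : y = 1 - u) (ez : z = v - 77/100) (ew : w = 1 - v) :
    eP u v ≤ 0 := by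
  have e : 0 - eP u v = 1523809277/16425450*(x^0*y^3*(z^0*w^3)) + 156435863/304175*(x^1*y^2*(z^0*w^3)) + 221188663/219006*(x^2*y^1*(z^0*w^3)) + 213669175/328509*(x^3*y^0*(z^0*w^3)) + 1503149576/8212725*(x^0*y^3*(z^1*w^2)) + 1076653514/912525*(x^1*y^2*(z^1*w^2)) + 261625669/109503*(x^2*y^1*(z^1*w^2)) + 504727925/328509*(x^3*y^0*(z^1*w^2)) + 76623458/328509*(x^0*y^3*(z^2*w^1)) + 36669962/36501*(x^1*y^2*(z^2*w^1)) + 177131650/109503*(x^2*y^1*(z^2*w^1)) + 305933750/328509*(x^3*y^0*(z^2*w^1)) + 134192800/328509*(x^0*y^3*(z^3*w^0)) + 11121400/12167*(x^1*y^2*(z^3*w^0)) + 60320000/109503*(x^2*y^1*(z^3*w^0)) + 14875000/328509*(x^3*y^0*(z^3*w^0)) := by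
    subst ex ey ez ew; simp only [eP, gP]; ring
  rw [← sub_nonneg, e]; positivity

theorem e_nonpos1 (u v : ℝ) (hv : 27/50 ≤ v) (hvu : v ≤ u) (hu : u ≤ 1) : eP u v ≤ 0 := by
  rcases le_total u (77/100) with k0 | k0
  · exact eb0 _ _ _ _ u v (by linarith) (by linarith) (by linarith) (by linarith) rfl rfl rfl rfl
  rcases le_total u (83/100) with k1 | k1
  · rcases le_total v (77/100) with l | l
    · exact eb1 _ _ _ _ u v (by linarith) (by linarith) (by linarith) (by linarith) rfl rfl rfl rfl
    exact eb2 _ _ _ _ u v (by linarith) (by linarith) (by linarith) (by linarith) rfl rfl rfl rfl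
  rcases le_total u (22/25) with k2 | k2
  · rcases le_total v (77/100) with l | l
    · exact eb3 _ _ _ _ u v (by linarith) (by linarith) (by linarith) (by linarith) rfl rfl rfl rfl
    exact eb4 _ _ _ _ u v (by linarith) (by linarith) (by linarith) (by linarith) rfl rfl rfl rfl
  rcases le_total v (77/100) with l | l
  · exact eb5 _ _ _ _ u v (by linarith) (by linarith) (by linarith) (by linarith) rfl rfl rfl rfl
  exact eb6 _ _ _ _ u v (by linarith) (by linarith) (by linarith) (by linarith) rfl rfl rfl rfl

theorem e_nonpos (u v : ℝ) (hu : 27/50 ≤ u) (hu1 : u ≤ 1) (hv : 27/50 ≤ v) (hv1 : v ≤ 1) : eP u v ≤ 0 := by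
  rcases le_total v u with h | h
  · exact e_nonpos1 u v hv h hu1
  · have := e_nonpos1 v u hu h hv1
    have e : eP u v = eP v u := by simp only [eP]; ring
    rw [e]; exact this

noncomputable def tP : ℕ → ℝ → ℝ → ℝ
  | 0, _, _ => 1
  | 1, r, _ => r
  | (m+2), r, p => 2 * r * tP (m+1) r p - p * tP m r p

theorem tP_eq (z w : ℂ) : ∀ m : ℕ,
    tP m (z.re * w.re + z.im * w.im) ((z.re^2 + z.im^2) * (w.re^2 + w.im^2))
      = (z^m).re * (w^m).re + (z^m).im * (w^m).im
  | 0 => by simp [tP]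
  | 1 => by simp [tP]
  | (m+2) => by
    rw [tP, tP_eq z w (m+1), tP_eq z w m]
    simp only [pow_succ, Complex.mul_re, Complex.mul_im]
    ring

/-- The basic positive semidefinite kernel. -/
noncomputable def kP (φ : ℝ → ℝ) (m₁ m₂ : ℕ) (a b c d : ℂ) : ℝ :=
  φ (a.re^2 + a.im^2) * φ (c.re^2 + c.im^2)
    * tP m₁ (a.re * c.re + a.im * c.im) ((a.re^2 + a.im^2) * (c.re^2 + c.im^2))
    * tP m₂ (b.re * d.re + b.im * d.im) ((b.re^2 + b.im^2) * (d.re^2 + d.im^2))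

theorem sum_sq {ι : Type*} (S : Finset ι) (F : ι → ℝ) : 0 ≤ ∑ i ∈ S, ∑ j ∈ S, F i * F j := by
  rw [← Finset.sum_mul_sum]; exact mul_self_nonneg _

theorem kP_nonneg {ι : Type*} (S : Finset ι) (a b : ι → ℂ) (φ : ℝ → ℝ) (m₁ m₂ : ℕ) :
    0 ≤ ∑ i ∈ S, ∑ j ∈ S, kP φ m₁ m₂ (a i) (b i) (a j) (b j) := by
  have h1 := sum_sq S (fun i => φ ((a i).re^2 + (a i).im^2) * (a i ^ m₁).re * (b i ^ m₂).re)
  have h2 := sum_sq S (fun i => φ ((a i).re^2 + (a i).im^2) * (a i ^ m₁).re * (b i ^ m₂).im)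
  have h3 := sum_sq S (fun i => φ ((a i).re^2 + (a i).im^2) * (a i ^ m₁).im * (b i ^ m₂).re)
  have h4 := sum_sq S (fun i => φ ((a i).re^2 + (a i).im^2) * (a i ^ m₁).im * (b i ^ m₂).im)
  refine le_trans (add_nonneg (add_nonneg h1 h2) (add_nonneg h3 h4)) (le_of_eq ?_)
  simp only [← Finset.sum_add_distrib]
  refine Finset.sum_congr rfl fun i _ => Finset.sum_congr rfl fun j _ => ?_
  rw [kP, tP_eq, tP_eq]
  ring

set_option maxHeartbeats 4000000 in
theorem u1_eq (a b c d : ℂ) (h : b.re^2 + b.im^2 = 1 - (a.re^2 + a.im^2))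
    (h' : d.re^2 + d.im^2 = 1 - (c.re^2 + c.im^2)) (t : ℝ)
    (ht : t = (a.re * c.re + a.im * c.im) + (b.re * d.re + b.im * d.im)) :
    (2)*t =
      2 * kP (fun n => (1)) 0 1 a b c d +
      2 * kP (fun n => (1)) 1 0 a b c d := by
  subst ht
  simp only [kP, h, h']
  generalize a.re * c.re + a.im * c.im = r
  generalize b.re * d.re + b.im * d.im = s
  generalize a.re^2 + a.im^2 = n
  generalize c.re^2 + c.im^2 = m
  simp only [tP]
  ring

theorem u1_nonneg {ι : Type*} (S : Finset ι) (a b : ι → ℂ)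
    (h : ∀ i ∈ S, (b i).re^2 + (b i).im^2 = 1 - ((a i).re^2 + (a i).im^2)) (t : ι → ι → ℝ)
    (ht : ∀ i ∈ S, ∀ j ∈ S, t i j = ((a i).re * (a j).re + (a i).im * (a j).im) + ((b i).re * (b j).re + (b i).im * (b j).im)) :
    0 ≤ ∑ i ∈ S, ∑ j ∈ S, ((2)*(t i j)) := by
  rw [Finset.sum_congr rfl fun i hi => Finset.sum_congr rfl fun j hj =>
    u1_eq (a i) (b i) (a j) (b j) (h i hi) (h j hj) (t i j) (ht i hi j hj)]
  simp only [Finset.sum_add_distrib, ← Finset.mul_sum]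
  have K := kP_nonneg S a b
  repeat' apply add_nonneg
  all_goals exact mul_nonneg (by norm_num) (K _ _ _)

set_option maxHeartbeats 4000000 in
theorem u2_eq (a b c d : ℂ) (h : b.re^2 + b.im^2 = 1 - (a.re^2 + a.im^2))
    (h' : d.re^2 + d.im^2 = 1 - (c.re^2 + c.im^2)) (t : ℝ)
    (ht : t = (a.re * c.re + a.im * c.im) + (b.re * d.re + b.im * d.im)) :
    (-1) + (4)*t^2 =
      1 * kP (fun n => (1) + (-2)*n) 0 0 a b c d +
      2 * kP (fun n => (1)) 0 2 a b c d +
      8 * kP (fun n => (1)) 1 1 a b c d +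
      2 * kP (fun n => (1)) 2 0 a b c d := by
  subst ht
  simp only [kP, h, h']
  generalize a.re * c.re + a.im * c.im = r
  generalize b.re * d.re + b.im * d.im = s
  generalize a.re^2 + a.im^2 = n
  generalize c.re^2 + c.im^2 = m
  simp only [tP]
  ring

theorem u2_nonneg {ι : Type*} (S : Finset ι) (a b : ι → ℂ)
    (h : ∀ i ∈ S, (b i).re^2 + (b i).im^2 = 1 - ((a i).re^2 + (a i).im^2)) (t : ι → ι → ℝ)
    (ht : ∀ i ∈ S, ∀ j ∈ S, t i j = ((a i).re * (a j).re + (a i).im * (a j).im) + ((b i).re * (b j).re + (b i).im * (b j).im)) :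
    0 ≤ ∑ i ∈ S, ∑ j ∈ S, ((-1) + (4)*(t i j)^2) := by
  rw [Finset.sum_congr rfl fun i hi => Finset.sum_congr rfl fun j hj =>
    u2_eq (a i) (b i) (a j) (b j) (h i hi) (h j hj) (t i j) (ht i hi j hj)]
  simp only [Finset.sum_add_distrib, ← Finset.mul_sum]
  have K := kP_nonneg S a b
  repeat' apply add_nonneg
  all_goals exact mul_nonneg (by norm_num) (K _ _ _)

set_option maxHeartbeats 4000000 in
theorem u3_eq (a b c d : ℂ) (h : b.re^2 + b.im^2 = 1 - (a.re^2 + a.im^2))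
    (h' : d.re^2 + d.im^2 = 1 - (c.re^2 + c.im^2)) (t : ℝ)
    (ht : t = (a.re * c.re + a.im * c.im) + (b.re * d.re + b.im * d.im)) :
    (-4)*t + (8)*t^3 =
      2 * kP (fun n => (1) + (-3)*n) 0 1 a b c d +
      2 * kP (fun n => (1)) 0 3 a b c d +
      2 * kP (fun n => (2) + (-3)*n) 1 0 a b c d +
      12 * kP (fun n => (1)) 1 2 a b c d +
      12 * kP (fun n => (1)) 2 1 a b c d +
      2 * kP (fun n => (1)) 3 0 a b c d := by
  subst ht
  simp only [kP, h, h']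
  generalize a.re * c.re + a.im * c.im = r
  generalize b.re * d.re + b.im * d.im = s
  generalize a.re^2 + a.im^2 = n
  generalize c.re^2 + c.im^2 = m
  simp only [tP]
  ring

theorem u3_nonneg {ι : Type*} (S : Finset ι) (a b : ι → ℂ)
    (h : ∀ i ∈ S, (b i).re^2 + (b i).im^2 = 1 - ((a i).re^2 + (a i).im^2)) (t : ι → ι → ℝ)
    (ht : ∀ i ∈ S, ∀ j ∈ S, t i j = ((a i).re * (a j).re + (a i).im * (a j).im) + ((b i).re * (b j).re + (b i).im * (b j).im)) :
    0 ≤ ∑ i ∈ S, ∑ j ∈ S, ((-4)*(t i j) + (8)*(t i j)^3) := by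
  rw [Finset.sum_congr rfl fun i hi => Finset.sum_congr rfl fun j hj =>
    u3_eq (a i) (b i) (a j) (b j) (h i hi) (h j hj) (t i j) (ht i hi j hj)]
  simp only [Finset.sum_add_distrib, ← Finset.mul_sum]
  have K := kP_nonneg S a b
  repeat' apply add_nonneg
  all_goals exact mul_nonneg (by norm_num) (K _ _ _)

set_option maxHeartbeats 4000000 in
theorem u4_eq (a b c d : ℂ) (h : b.re^2 + b.im^2 = 1 - (a.re^2 + a.im^2))
    (h' : d.re^2 + d.im^2 = 1 - (c.re^2 + c.im^2)) (t : ℝ)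
    (ht : t = (a.re * c.re + a.im * c.im) + (b.re * d.re + b.im * d.im)) :
    (1) + (-12)*t^2 + (16)*t^4 =
      1 * kP (fun n => (1) + (-6)*n + (6)*n^2) 0 0 a b c d +
      2 * kP (fun n => (1) + (-4)*n) 0 2 a b c d +
      2 * kP (fun n => (1)) 0 4 a b c d +
      24 * kP (fun n => (1) + (-2)*n) 1 1 a b c d +
      16 * kP (fun n => (1)) 1 3 a b c d +
      2 * kP (fun n => (3) + (-4)*n) 2 0 a b c d +
      24 * kP (fun n => (1)) 2 2 a b c d +
      16 * kP (fun n => (1)) 3 1 a b c d +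
      2 * kP (fun n => (1)) 4 0 a b c d := by
  subst ht
  simp only [kP, h, h']
  generalize a.re * c.re + a.im * c.im = r
  generalize b.re * d.re + b.im * d.im = s
  generalize a.re^2 + a.im^2 = n
  generalize c.re^2 + c.im^2 = m
  simp only [tP]
  ring

theorem u4_nonneg {ι : Type*} (S : Finset ι) (a b : ι → ℂ)
    (h : ∀ i ∈ S, (b i).re^2 + (b i).im^2 = 1 - ((a i).re^2 + (a i).im^2)) (t : ι → ι → ℝ)
    (ht : ∀ i ∈ S, ∀ j ∈ S, t i j = ((a i).re * (a j).re + (a i).im * (a j).im) + ((b i).re * (b j).re + (b i).im * (b j).im)) :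
    0 ≤ ∑ i ∈ S, ∑ j ∈ S, ((1) + (-12)*(t i j)^2 + (16)*(t i j)^4) := by
  rw [Finset.sum_congr rfl fun i hi => Finset.sum_congr rfl fun j hj =>
    u4_eq (a i) (b i) (a j) (b j) (h i hi) (h j hj) (t i j) (ht i hi j hj)]
  simp only [Finset.sum_add_distrib, ← Finset.mul_sum]
  have K := kP_nonneg S a b
  repeat' apply add_nonneg
  all_goals exact mul_nonneg (by norm_num) (K _ _ _)

set_option maxHeartbeats 4000000 in
theorem u9_eq (a b c d : ℂ) (h : b.re^2 + b.im^2 = 1 - (a.re^2 + a.im^2))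
    (h' : d.re^2 + d.im^2 = 1 - (c.re^2 + c.im^2)) (t : ℝ)
    (ht : t = (a.re * c.re + a.im * c.im) + (b.re * d.re + b.im * d.im)) :
    (10)*t + (-160)*t^3 + (672)*t^5 + (-1024)*t^7 + (512)*t^9 =
      2 * kP (fun n => (1) + (-24)*n + (126)*n^2 + (-224)*n^3 + (126)*n^4) 0 1 a b c d +
      2 * kP (fun n => (1) + (-21)*n + (84)*n^2 + (-84)*n^3) 0 3 a b c d +
      2 * kP (fun n => (1) + (-16)*n + (36)*n^2) 0 5 a b c d +
      2 * kP (fun n => (1) + (-9)*n) 0 7 a b c d +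
      2 * kP (fun n => (1)) 0 9 a b c d +
      2 * kP (fun n => (5) + (-60)*n + (210)*n^2 + (-280)*n^3 + (126)*n^4) 1 0 a b c d +
      24 * kP (fun n => (2) + (-21)*n + (56)*n^2 + (-42)*n^3) 1 2 a b c d +
      84 * kP (fun n => (1) + (-8)*n + (12)*n^2) 1 4 a b c d +
      16 * kP (fun n => (2) + (-9)*n) 1 6 a b c d +
      36 * kP (fun n => (1)) 1 8 a b c d +
      24 * kP (fun n => (5) + (-35)*n + (70)*n^2 + (-42)*n^3) 2 1 a b c d +
      56 * kP (fun n => (3) + (-16)*n + (18)*n^2) 2 3 a b c d +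
      336 * kP (fun n => (1) + (-3)*n) 2 5 a b c d +
      144 * kP (fun n => (1)) 2 7 a b c d +
      2 * kP (fun n => (20) + (-105)*n + (168)*n^2 + (-84)*n^3) 3 0 a b c d +
      56 * kP (fun n => (5) + (-20)*n + (18)*n^2) 3 2 a b c d +
      56 * kP (fun n => (4) + (-9)*n) 3 4 a b c d +
      336 * kP (fun n => (1)) 3 6 a b c d +
      84 * kP (fun n => (5) + (-16)*n + (12)*n^2) 4 1 a b c d +
      56 * kP (fun n => (5) + (-9)*n) 4 3 a b c d +
      504 * kP (fun n => (1)) 4 5 a b c d +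
      2 * kP (fun n => (21) + (-56)*n + (36)*n^2) 5 0 a b c d +
      336 * kP (fun n => (2) + (-3)*n) 5 2 a b c d +
      504 * kP (fun n => (1)) 5 4 a b c d +
      16 * kP (fun n => (7) + (-9)*n) 6 1 a b c d +
      336 * kP (fun n => (1)) 6 3 a b c d +
      2 * kP (fun n => (8) + (-9)*n) 7 0 a b c d +
      144 * kP (fun n => (1)) 7 2 a b c d +
      36 * kP (fun n => (1)) 8 1 a b c d +
      2 * kP (fun n => (1)) 9 0 a b c d := by
  subst ht
  simp only [kP, h, h']
  generalize a.re * c.re + a.im * c.im = r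
  generalize b.re * d.re + b.im * d.im = s
  generalize a.re^2 + a.im^2 = n
  generalize c.re^2 + c.im^2 = m
  simp only [tP]
  ring

theorem u9_nonneg {ι : Type*} (S : Finset ι) (a b : ι → ℂ)
    (h : ∀ i ∈ S, (b i).re^2 + (b i).im^2 = 1 - ((a i).re^2 + (a i).im^2)) (t : ι → ι → ℝ)
    (ht : ∀ i ∈ S, ∀ j ∈ S, t i j = ((a i).re * (a j).re + (a i).im * (a j).im) + ((b i).re * (b j).re + (b i).im * (b j).im)) :
    0 ≤ ∑ i ∈ S, ∑ j ∈ S, ((10)*(t i j) + (-160)*(t i j)^3 + (672)*(t i j)^5 + (-1024)*(t i j)^7 + (512)*(t i j)^9) := by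
  rw [Finset.sum_congr rfl fun i hi => Finset.sum_congr rfl fun j hj =>
    u9_eq (a i) (b i) (a j) (b j) (h i hi) (h j hj) (t i j) (ht i hi j hj)]
  simp only [Finset.sum_add_distrib, ← Finset.mul_sum]
  have K := kP_nonneg S a b
  repeat' apply add_nonneg
  all_goals exact mul_nonneg (by norm_num) (K _ _ _)

theorem psd2_id (x w v : Fin 4 → ℝ) (A A' : ℝ) (hx : ∑ a, x a * x a = 1)
    (hw : ∑ a, w a * x a = 0) (hv : ∑ a, v a * x a = 0)
    (hA : A = ∑ a, w a * w a) (hA' : A' = ∑ a, v a * v a) :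
    ∑ a : Fin 4, ∑ b : Fin 4, (w a * w b - A / 3 * ((if a = b then 1 else 0) - x a * x b)) *
      (v a * v b - A' / 3 * ((if a = b then 1 else 0) - x a * x b))
      = (∑ a, w a * v a)^2 - A * A' / 3 := by
  simp only [Fin.sum_univ_four] at *
  simp only [Fin.isValue, Fin.reduceEq, if_true, if_false]
  linear_combination (A'/3) * (w 0 * x 0 + w 1 * x 1 + w 2 * x 2 + w 3 * x 3) * hw
    + (A/3) * (v 0 * x 0 + v 1 * x 1 + v 2 * x 2 + v 3 * x 3) * hv
    + (A/3) * (A'/3) * (x 0 * x 0 + x 1 * x 1 + x 2 * x 2 + x 3 * x 3 - 1) * hx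
    + (A'/3) * hA + (A/3) * hA'

theorem psd2 {ι : Type*} (S : Finset ι) (x : Fin 4 → ℝ) (w : ι → Fin 4 → ℝ) (c : ι → ℝ)
    (hx : ∑ a, x a * x a = 1) (hw : ∀ i ∈ S, ∑ a, w i a * x a = 0) :
    0 ≤ ∑ i ∈ S, ∑ j ∈ S, c i * c j * (3 * (∑ a, w i a * w j a)^2
      - (∑ a, w i a * w i a) * (∑ a, w j a * w j a)) := by
  have e : ∀ i ∈ S, ∀ j ∈ S, c i * c j * (3 * (∑ a, w i a * w j a)^2
      - (∑ a, w i a * w i a) * (∑ a, w j a * w j a)) = ∑ a : Fin 4, ∑ b : Fin 4, 3 *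
      ((c i * (w i a * w i b - (∑ a, w i a * w i a) / 3 * ((if a = b then 1 else 0) - x a * x b))) *
      (c j * (w j a * w j b - (∑ a, w j a * w j a) / 3 * ((if a = b then 1 else 0) - x a * x b)))) := by
    intro i hi j hj
    have := psd2_id x (w i) (w j) _ _ hx (hw i hi) (hw j hj) rfl rfl
    rw [show c i * c j * (3 * (∑ a, w i a * w j a)^2
      - (∑ a, w i a * w i a) * (∑ a, w j a * w j a)) = 3 * (c i * c j) * ((∑ a, w i a * w j a)^2
      - (∑ a, w i a * w i a) * (∑ a, w j a * w j a) / 3) by ring, ← this, Finset.mul_sum]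
    refine Finset.sum_congr rfl fun a _ => ?_
    rw [Finset.mul_sum]
    refine Finset.sum_congr rfl fun b _ => ?_
    ring
  rw [Finset.sum_congr rfl fun i hi => Finset.sum_congr rfl fun j hj => e i hi j hj]
  rw [Finset.sum_congr rfl fun i hi => Finset.sum_comm]
  rw [Finset.sum_comm]
  refine Finset.sum_nonneg fun a _ => ?_
  rw [Finset.sum_congr rfl fun i hi => Finset.sum_comm]
  rw [Finset.sum_comm]
  refine Finset.sum_nonneg fun b _ => ?_
  simp only [← Finset.mul_sum]
  have := sum_sq S (fun i => c i * (w i a * w i b - (∑ a, w i a * w i a) / 3 * ((if a = b then 1 else 0) - x a * x b)))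
  simp only [← Finset.mul_sum] at this
  linarith

theorem psd1 {ι : Type*} (S : Finset ι) (w : ι → Fin 4 → ℝ) (c : ι → ℝ) :
    0 ≤ ∑ i ∈ S, ∑ j ∈ S, c i * c j * (∑ a, w i a * w j a) := by
  have e : ∀ i ∈ S, ∀ j ∈ S, c i * c j * (∑ a, w i a * w j a)
      = ∑ a : Fin 4, (c i * w i a) * (c j * w j a) := by
    intro i _ j _
    rw [Finset.mul_sum]
    exact Finset.sum_congr rfl fun a _ => by ring
  rw [Finset.sum_congr rfl fun i hi => Finset.sum_congr rfl fun j hj => e i hi j hj]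
  rw [Finset.sum_congr rfl fun i hi => Finset.sum_comm]
  rw [Finset.sum_comm]
  exact Finset.sum_nonneg fun a _ => sum_sq S _

/-- the off-diagonal inequality -/
theorem off (u v s : ℝ) (hu : 27/50 ≤ u) (hu1 : u ≤ 1) (hv : 27/50 ≤ v) (hv1 : v ≤ 1)
    (h1 : s ≤ 1/2 - u*v) (h2 : -(1 - (u^2+v^2)/2) ≤ s) :
    gP u * gP v * s + 3/2 * ((1-u) * (1-v)) * (3 * s^2 - (1-u^2) * (1-v^2))
      ≤ - ((u - 27/50) * (v - 27/50)) := by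
  have he := e_nonpos u v hu hu1 hv hv1
  have hgu : 3/2 * (1-u) ≤ gP u := by simp only [gP]; linarith
  have hgv : 3/2 * (1-v) ≤ gP v := by simp only [gP]; linarith
  have hg : 3/2 * (1-u) * (3/2 * (1-v)) ≤ gP u * gP v :=
    mul_le_mul hgu hgv (by linarith) (by linarith)
  have hp : 0 ≤ (1-u) * (1-v) := mul_nonneg (by linarith) (by linarith)
  have hs : 0 ≤ s + (1/2 - u*v) + 1/2 := by nlinarith [sq_nonneg (u-v)]
  have k : 0 ≤ gP u * gP v + 9/2 * ((1-u) * (1-v)) * (s + (1/2 - u*v)) := by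
    nlinarith [mul_nonneg hp hs]
  have k2 := mul_nonneg (sub_nonneg.2 h1) k
  simp only [eP] at he
  nlinarith

theorem dP_pos (u : ℝ) (h : 27/50 ≤ u) (hu1 : u ≤ 1) : 0 < dP u := by
  have hg : 0 < gP u := by simp only [gP]; linarith
  have h1 : 0 ≤ 1 - u^2 := by nlinarith
  simp only [dP]
  rcases eq_or_lt_of_le hu1 with e | e
  · subst e; norm_num
  · have : 0 < 1 - u^2 := by nlinarith
    positivity

theorem cap {ι : Type*} (S : Finset ι) (x : Fin 4 → ℝ) (y : ι → Fin 4 → ℝ) (u : ι → ℝ)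
    (hx : ∑ a, x a * x a = 1) (hy : ∀ i ∈ S, ∑ a, y i a * y i a = 1)
    (hu : ∀ i ∈ S, u i = - ∑ a, x a * y i a)
    (hu0 : ∀ i ∈ S, 27/50 ≤ u i) (hu1 : ∀ i ∈ S, u i ≤ 1)
    (hyy : ∀ i ∈ S, ∀ j ∈ S, i ≠ j → ∑ a, y i a * y j a ≤ 1/2) :
    ∑ i ∈ S, (u i - 27/50)^2 / dP (u i) ≤ 1 := by
  classical
  set w : ι → Fin 4 → ℝ := fun i a => y i a + u i * x a with hw
  have hwx : ∀ i ∈ S, ∑ a, w i a * x a = 0 := by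
    intro i hi
    have := hu i hi
    simp only [hw, Fin.sum_univ_four] at *
    linear_combination (u i) * hx + this
  have hww : ∀ i ∈ S, ∀ j ∈ S, ∑ a, w i a * w j a = (∑ a, y i a * y j a) - u i * u j := by
    intro i hi j hj
    have h1 := hu i hi
    have h2 := hu j hj
    simp only [hw, Fin.sum_univ_four] at *
    linear_combination (u i * u j) * hx + (u j) * h1 + (u i) * h2
  have hA : ∀ i ∈ S, ∑ a, w i a * w i a = 1 - (u i)^2 := by
    intro i hi
    rw [hww i hi i hi, hy i hi]; ring
  set α : ι → ℝ := fun i => (u i - 27/50) / dP (u i) with hα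
  have hα0 : ∀ i ∈ S, 0 ≤ α i := fun i hi =>
    div_nonneg (by linarith [hu0 i hi]) (dP_pos _ (hu0 i hi) (hu1 i hi)).le
  have p1 := psd1 S w (fun i => α i * gP (u i))
  have p2 := psd2 S x w (fun i => α i * (1 - u i)) hx hwx
  have key : ∀ i ∈ S, ∀ j ∈ S,
      (α i * gP (u i)) * (α j * gP (u j)) * (∑ a, w i a * w j a)
      + 3/2 * ((α i * (1 - u i)) * (α j * (1 - u j)) * (3 * (∑ a, w i a * w j a)^2
      - (∑ a, w i a * w i a) * (∑ a, w j a * w j a)))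
      ≤ (if i = j then (u i - 27/50)^2 / dP (u i) else 0)
        - (u i - 27/50)^2 / dP (u i) * ((u j - 27/50)^2 / dP (u j)) := by
    intro i hi j hj
    have di := dP_pos _ (hu0 i hi) (hu1 i hi)
    have dj := dP_pos _ (hu0 j hj) (hu1 j hj)
    have ei : (u i - 27/50)^2 / dP (u i) = α i * (u i - 27/50) := by
      simp only [hα]; ring
    have ej : (u j - 27/50)^2 / dP (u j) = α j * (u j - 27/50) := by
      simp only [hα]; ring
    by_cases hij : i = j
    · subst hij
      rw [if_pos rfl, hA i hi, ei]
      have : α i * dP (u i) = u i - 27/50 := by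
        simp only [hα]; field_simp
      have h3 : α i * (u i - 27/50) = α i * α i * dP (u i) := by rw [← this]; ring
      apply le_of_eq
      have hd : dP (u i) = (u i - 27/50)^2 + (gP (u i))^2 * (1 - (u i)^2)
        + 3 * (1-(u i))^2 * (1 - (u i)^2)^2 := rfl
      rw [hd] at h3
      linear_combination -h3
    · rw [if_neg hij, ei, ej, hA i hi, hA j hj]
      have hs1 : ∑ a, w i a * w j a ≤ 1/2 - u i * u j := by
        rw [hww i hi j hj]; linarith [hyy i hi j hj hij]
      have hs2 : -(1 - ((u i)^2 + (u j)^2)/2) ≤ ∑ a, w i a * w j a := by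
        have h1 := hA i hi
        have h2 := hA j hj
        have h3 : 0 ≤ ∑ a, (w i a + w j a)^2 := Finset.sum_nonneg fun a _ => sq_nonneg _
        simp only [Fin.sum_univ_four] at h1 h2 h3 ⊢
        linarith
      have := off _ _ _ (hu0 i hi) (hu1 i hi) (hu0 j hj) (hu1 j hj) hs1 hs2
      have := mul_le_mul_of_nonneg_left this (mul_nonneg (hα0 i hi) (hα0 j hj))
      linarith
  have tot := Finset.sum_le_sum fun i hi => Finset.sum_le_sum fun j hj => key i hi j hj
  simp only [Finset.sum_add_distrib, Finset.sum_sub_distrib, ← Finset.mul_sum, Finset.sum_ite_eq,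
    ← Finset.sum_mul] at tot p1 p2
  rw [Finset.sum_congr rfl fun i hi => if_pos hi] at tot
  by_contra hc
  push Not at hc
  nlinarith

theorem row {ι : Type*} [DecidableEq ι] (S : Finset ι) (y : ι → Fin 4 → ℝ)
    (hy : ∀ i ∈ S, ∑ a, y i a * y i a = 1)
    (hyy : ∀ i ∈ S, ∀ j ∈ S, i ≠ j → ∑ a, y i a * y j a ≤ 1/2) (k : ι) (hk : k ∈ S) :
    ∑ j ∈ S, fP (∑ a, y k a * y j a) ≤ fP 1 + 1329/200 := by
  rw [← Finset.add_sum_erase S _ hk, hy k hk]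
  have hlo : ∀ j ∈ S, -1 ≤ ∑ a, y k a * y j a := by
    intro j hj
    have h1 := hy k hk
    have h2 := hy j hj
    have h3 : 0 ≤ ∑ a, (y k a + y j a)^2 := Finset.sum_nonneg fun a _ => sq_nonneg _
    simp only [Fin.sum_univ_four] at h1 h2 h3 ⊢
    linarith
  set T := (S.erase k).filter (fun j => ∑ a, y k a * y j a ≤ -27/50) with hT
  have hTm : ∀ j ∈ T, j ∈ S ∧ ∑ a, y k a * y j a ≤ -27/50 := by
    intro j hj
    simp only [hT, Finset.mem_filter, Finset.mem_erase] at hj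
    exact ⟨hj.1.2, hj.2⟩
  have c := cap T (y k) y (fun j => - ∑ a, y k a * y j a) (hy k hk) (fun i hi => hy i (hTm i hi).1)
    (fun _ _ => rfl) (fun i hi => by linarith [(hTm i hi).2])
    (fun i hi => by linarith [hlo i (hTm i hi).1])
    (fun i hi j hj => hyy i (hTm i hi).1 j (hTm j hj).1)
  have h1 : ∑ j ∈ S.erase k, fP (∑ a, y k a * y j a) ≤ ∑ j ∈ T, fP (∑ a, y k a * y j a) := by
    rw [← Finset.sum_filter_add_sum_filter_not (S.erase k) (fun j => ∑ a, y k a * y j a ≤ -27/50)]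
    rw [← hT]
    have : ∑ j ∈ (S.erase k).filter (fun j => ¬ ∑ a, y k a * y j a ≤ -27/50),
        fP (∑ a, y k a * y j a) ≤ 0 := by
      refine Finset.sum_nonpos fun j hj => ?_
      simp only [Finset.mem_filter, Finset.mem_erase, not_le] at hj
      exact f_nonpos _ hj.2.le (hyy k hk j hj.1.2 (Ne.symm hj.1.1))
    linarith
  have h2 : ∑ j ∈ T, fP (∑ a, y k a * y j a) ≤ ∑ j ∈ T, 1329/200 *
      ((-(∑ a, y k a * y j a) - 27/50)^2 / dP (-(∑ a, y k a * y j a))) := by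
    refine Finset.sum_le_sum fun j hj => ?_
    have l0 : 27/50 ≤ -(∑ a, y k a * y j a) := by linarith [(hTm j hj).2]
    have l1 : -(∑ a, y k a * y j a) ≤ 1 := by linarith [hlo j (hTm j hj).1]
    have := f_cap _ l0 l1
    rw [neg_neg] at this
    rw [← mul_div_assoc, le_div_iff₀ (dP_pos _ l0 l1)]
    exact this
  rw [← Finset.mul_sum] at h2
  linarith

theorem main {ι : Type*} [DecidableEq ι] (S : Finset ι) (y : ι → Fin 4 → ℝ)
    (hy : ∀ i ∈ S, ∑ a, y i a * y i a = 1)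
    (hyy : ∀ i ∈ S, ∀ j ∈ S, i ≠ j → ∑ a, y i a * y j a ≤ 1/2) : S.card ≤ 24 := by
  have up : ∑ i ∈ S, ∑ j ∈ S, fP (∑ a, y i a * y j a) ≤ S.card * (fP 1 + 1329/200) := by
    rw [← nsmul_eq_mul]
    exact Finset.sum_le_card_nsmul _ _ _ fun i hi => row S y hy hyy i hi
  set A : ι → ℂ := fun i => ⟨y i 0, y i 1⟩ with hA
  set B : ι → ℂ := fun i => ⟨y i 2, y i 3⟩ with hB
  set t : ι → ι → ℝ := fun i j => ∑ a, y i a * y j a with ht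
  have h : ∀ i ∈ S, (B i).re^2 + (B i).im^2 = 1 - ((A i).re^2 + (A i).im^2) := by
    intro i hi
    have := hy i hi
    simp only [Fin.sum_univ_four] at this
    simp only [hA, hB]
    linarith
  have h' : ∀ i ∈ S, ∀ j ∈ S, t i j = ((A i).re * (A j).re + (A i).im * (A j).im) + ((B i).re * (B j).re + (B i).im * (B j).im) := by
    intro i _ j _
    simp only [ht, hA, hB, Fin.sum_univ_four]
    ring
  have e : ∑ i ∈ S, ∑ j ∈ S, fP (t i j) = (S.card : ℝ) * S.card
      + 4703/5000 * (∑ i ∈ S, ∑ j ∈ S, ((2)*(t i j)))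
      + 2029/1000 * (∑ i ∈ S, ∑ j ∈ S, ((-1) + (4)*(t i j)^2))
      + 104/125 * (∑ i ∈ S, ∑ j ∈ S, ((-4)*(t i j) + (8)*(t i j)^3))
      + 10113/10000 * (∑ i ∈ S, ∑ j ∈ S, ((1) + (-12)*(t i j)^2 + (16)*(t i j)^4))
      + 62/625 * (∑ i ∈ S, ∑ j ∈ S, ((10)*(t i j) + (-160)*(t i j)^3 + (672)*(t i j)^5 + (-1024)*(t i j)^7 + (512)*(t i j)^9)) := by
    have hc : (S.card : ℝ) * S.card = ∑ i ∈ S, ∑ j ∈ S, (1:ℝ) := by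
      simp
    rw [hc]
    simp only [Finset.mul_sum, ← Finset.sum_add_distrib]
    refine Finset.sum_congr rfl fun i _ => Finset.sum_congr rfl fun j _ => ?_
    simp only [fP]
    ring
  have q1 := u1_nonneg S A B h t h'
  have q2 := u2_nonneg S A B h t h'
  have q3 := u3_nonneg S A B h t h'
  have q4 := u4_nonneg S A B h t h'
  have q9 := u9_nonneg S A B h t h'
  have low : (S.card : ℝ) * S.card ≤ S.card * (fP 1 + 1329/200) := by
    refine le_trans ?_ up
    change _ ≤ ∑ i ∈ S, ∑ j ∈ S, fP (t i j)
    rw [e]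
    linarith
  have hf : fP 1 + 1329/200 < 25 := by simp only [fP]; norm_num
  by_contra hcon
  have hc : (25 : ℝ) ≤ S.card := by
    have : 25 ≤ S.card := by omega
    exact_mod_cast this
  nlinarith

end Kiss4

theorem kissing_number_dim4_le_24
    (S : Finset (EuclideanSpace ℝ (Fin 4)))
    (hnorm : ∀ x ∈ S, ‖x‖ = 1)
    (hdist : ∀ x ∈ S, ∀ y ∈ S, x ≠ y → 1 ≤ dist x y) :
    S.card ≤ 24 := by
  classical
  have hin : ∀ x y : EuclideanSpace ℝ (Fin 4), ∑ a, x a * y a = inner ℝ x y := by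
    intro x y
    simp [PiLp.inner_apply, mul_comm]
  have hn : ∀ x ∈ S, ∑ a, x a * x a = 1 := by
    intro x hx
    rw [hin, real_inner_self_eq_norm_sq, hnorm x hx]; norm_num
  refine Kiss4.main S (fun x a => x a) hn ?_
  intro x hx y hy hxy
  have hd := hdist x hx y hy hxy
  rw [hin]
  have h1 := norm_sub_sq_real x y
  rw [hnorm x hx, hnorm y hy, ← dist_eq_norm] at h1
  nlinarith
end

section
/- In dimension 6, every finite set S of points on the unit sphere of EuclideanSpace ℝ (Fin 6) (i.e., ‖x‖ = 1 for all x ∈ S) such that any two distinct points of S are at Euclidean distance at least 1 has cardinality at most 78; that is, the kissing number in dimension 6 is at most 78. -/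
section Kron

/-- polynomial expressions in three variables -/
inductive PE : Type
  | c (z : ℤ) : PE
  | u : PE
  | v : PE
  | t : PE
  | add (p q : PE) : PE
  | mul (p q : PE) : PE

namespace PE

def ev {A : Type*} [CommRing A] (a b d : A) : PE → A
  | c z => (z : A)
  | u => a
  | v => b
  | t => d
  | add p q => ev a b d p + ev a b d q
  | mul p q => ev a b d p * ev a b d q

def evZ (a b d : ℤ) : PE → ℤ
  | c z => z
  | u => a
  | v => b
  | t => d
  | add p q => Int.add (evZ a b d p) (evZ a b d q)
  | mul p q => Int.mul (evZ a b d p) (evZ a b d q)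

def nrm : PE → ℕ
  | c z => z.natAbs
  | u => 1
  | v => 1
  | t => 1
  | add p q => Nat.add (nrm p) (nrm q)
  | mul p q => Nat.mul (nrm p) (nrm q)

def deg : PE → ℕ
  | c _ => 0
  | u => 1
  | v => 1
  | t => 1
  | add p q => bif Nat.ble (deg p) (deg q) then deg q else deg p
  | mul p q => Nat.add (deg p) (deg q)

def sub (p q : PE) : PE := add p (mul (c (-1)) q)

/-- Horner scheme with expressions as coefficients -/
def horE (x : PE) : List PE → PE
  | [] => c 0
  | [a] => a
  | a :: b :: l => add a (mul x (horE x (b :: l)))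

def hor (x : PE) : List ℤ → PE
  | [] => c 0
  | [a] => c a
  | a :: b :: l => add (c a) (mul x (hor x (b :: l)))

def poly3 (L : List (List (List ℤ))) (x y z : PE) : PE :=
  horE x (L.map fun M => horE y (M.map fun l => hor z l))

def pw (x : PE) : ℕ → PE
  | 0 => c 1
  | n + 1 => mul x (pw x n)

def hE (r s : PE) : ℕ → List ℤ → PE
  | _, [] => c 0
  | k, [a] => mul (c a) (pw r k)
  | k, a :: b :: l => add (mul (c a) (pw r k)) (mul s (hE r s (k - 2) (b :: l)))

def sqs (a b : PE) : List (List ℤ) → PE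
  | [] => c 0
  | w :: l => add (mul (hor a w) (hor b w)) (sqs a b l)

def kE (a b d : PE) : List (ℕ × List ℤ × List (List ℤ)) → PE
  | [] => c 0
  | q :: l => add (mul (hE (sub d (mul a b)) (mul (sub (c 1) (mul a a)) (sub (c 1) (mul b b))) q.1 q.2.1)
      (sqs a b q.2.2)) (kE a b d l)

def sosE : List (Bool × Bool × List (List (List ℤ))) → PE
  | [] => c 0
  | q :: l => add (mul (bif q.2.1 then mul (add u (c 1)) (sub (c 1) (mul (c 2) u)) else c 1)
      (mul (bif q.1 then mul (sub v t) (sub v t) else c 1)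
        (mul (poly3 q.2.2 u (mul v t) (add v t)) (poly3 q.2.2 u (mul v t) (add v t))))) (sosE l)

end PE

def dataK : List (ℕ × List ℤ × List (List ℤ)) :=
  [(0, [1], [[-62431415722, -28648830272, 62010240697, 92121849029, -84478902532, 284895270780, 578030419553,
  -1622628463581, -1265943182330, 3307255987461, 2786405969741], [-53358585586, 33505460498, 145562306382,
  -134843615431, -554459292021, -626817056579, 512541558726, 2491269998140, 2098945539693, -1410978,
  -487353785830], [7175534147, 57710886474, -45004802523, -148400364303, 257006339953, -165650221232,
  -1008507355882, -870863, 1239130774837, 82360, -575857366022], [2157983854, -53688569558, -129771916254,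
  100024380491, 223624226700, 180660412231, 152828182194, -106603, 119331, 206173, 32352460267]]), (1, [1],
  [[-33445327873, -126952175750, 181471207406, 591146209841, 519180599480, -898077142774, -3473097842599,
  -1057624291702, 3915414691060, 2602694378737], [-13598512283, -6101863379, -49284579229, -530736591935,
  175496450575, 2574247711015, 1509809269383, -1673293764839, -1700196, 1508647876389], [-4409965292,
  -43015766482, -185761923572, -47977871164, -22075222257, -53128, 880319535178, 394579127332, -135167,
  142344453606], [-23195664809, 84463754966, 66168076096, -210320243255, 431965215, -338112, 167584,
  -470612326520, -204764, 640149532107], [-1433671887, -18716904119, 64684572347, -35558392853, 205317974846,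
  152596, -315301, -140158584467, -110709, -173263]]), (2, [5, -1], [[-14428197589, -10532144807,
  159979032149, -148392105114, -1046128333842, 378532740839, 2461932882816, 430738517812, -1192162370382],
  [-10588724601, 34655670896, 144290498586, 130752474382, -658734808321, -1593758326366, -1532938,
  2011841474571, 916458581575], [-9282038254, -55376796228, -71956025919, -3519033611, 442500021379,
  191968254591, -439920, 754430, 1906721738], [-5765660447, -45727378049, -74186288630, -15329883799, 210163,
  276746513877, -763934, 694406, 363748367475], [-635618176, -68510372007, 22743821502, 231104989162, 76672,
  -10428866361, 87614, -8965, 186484], [-3440040326, -5578822991, 112848953714, 70156, -226663, -28147797610,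
  -37514, -9577, 149654]]), (3, [7, -3], [[-131885162, 12014853349, -98256577079, -646553145410, 534994841727,
  2735695006473, 138933841077, -2112834283135], [1541823411, 25835326287, 70206096346, -100990541827,
  -820864942544, 1226300, 2144182335530, 1467652690022], [17283860757, 43875667920, -3342462770, -75640765524,
  144623209016, 515875, -86150, 392955525249], [-5867217481, 73190139626, 53619586851, -45596461373,
  -31394385596, 294972, -88133, 16444]]), (4, [21, -14, 1], [[-2815069501, -532642923, 122448500111,
  -240524563178, -1005872983782, 699512392135, 1902796432066], [4516380819, 746961853, -128101835426,
  -151768966485, 547675970833, 735439487402, -1098293], [6883879080, -29520890143, -86358684247, 150623570419,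
  347153659773, -218, -101140]]), (5, [33, -30, 5], [[-3981037011, 8644299973, -44844798221, -485174238231,
  262654645490, 1246953508122], [11184344856, 2280907932, -32310411388, -57099012500, 126119279101, 805821],
  [-11525057573, -13433622533, -1951644901, 111814998257, 1400414, -413103]]), (6, [429, -495, 135, -5],
  [[1550997679, 2443148783, -53112774545, -10013914919, 182129988904]]), (7, [715, -1001, 385, -35],
  [[-106395488, -5600213473, -2239108640, 58657955637]])]

def dataS0 : Bool × Bool × List (List (List ℤ)) :=
  (false, false, [[[3663718666, -128601222584, -711504960998, -669423083366, 2584950088855, 5051423123562,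
  975236779633, -2108157866427, 457969948546, 1595249409937, 388588446650], [-878066912963, 559751798412,
  -2159521714058, -15830204588517, -7037555912217, 15941305413179, -2832688588250, -14020396062687,
  -3410262971111], [-2645673028973, 896775950770, -3579977949089, -52439438549901, 6575750827136,
  45747235129722, 14644597397503], [-1703557808675, 54780051417984, 3248474535218, -78147740990598,
  -40380306240803], [-17800598243506, 74032401322664, 35999282067300], [14937009825477]], [[-128601222584,
  -2301076834959, -1448517451685, 8180278641360, 9426911029293, -1186135234419, 1184200348191, 831071000119,
  336848626749, 475621495389], [-1622144765767, -4740794953144, -31161949557487, -16226749146724,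
  -16534274300059, -2211083334734, -5377137288832, -175945746581], [-8471528293492, 2903258568116,
  68199875124906, 23554420982143, 2523164258101, -8906969141610], [-38095450942148, -54562701648364,
  56364329580624, 8116009537368], [-74013677533628, -13743879052306]], [[-711504960998, -1448517451685,
  8544984076038, 3920393420840, -17101649903461, -17004226678969, 2402777856926, 5033441448656,
  4848973727863], [2710072818860, -25995141495225, 10768258397602, 104846916542387, 15534828169411,
  -55541988066515, -31808005356592], [39506595779823, -59279584920422, -81729777926701, 162572843072200,
  69365529704059], [49470500953177, -101444559351530, -65388452259252], [14078856116009]], [[-669423083366,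
  8180278641360, 3920393420840, -31584113587494, -16910735424868, 12707466138592, -9838932223681,
  -1369471448898], [-1295092281993, 37113999546240, 90425602170610, -40460117738075, 63697043720573,
  9424808906046], [5832106125034, 21581163083073, -100179651624191, -11869029134928], [165089621397,
  -7761991826013]], [[2584950088855, 9426911029293, -17101649903461, -16910735424868, 3554980422971,
  7349093106147, -15224134519090], [12045874488105, 70557989422145, 8857291263000, -66854840258721,
  66649472546872], [-22593262458990, 134098129617587, -35472688760681], [-21521258259822]], [[5051423123562,
  -1186135234419, -17004226678969, 12707466138592, 7349093106147, -3248434956659], [24579381147028,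
  -8170903104808, -24732922046098, -8453159784376], [-4063541383277, 64339943888166]], [[975236779633,
  1184200348191, 2402777856926, -9838932223681, -15224134519090], [-1199142047755, 9208898745121,
  60735046840124], [-15836524621026]], [[-2108157866427, 831071000119, 5033441448656, -1369471448898],
  [-12749231172153, 11092198813007]], [[457969948546, 336848626749, 4848973727863], [-5593299743810]],
  [[1595249409937, 475621495389]], [[388588446650]]])

def dataS1 : Bool × Bool × List (List (List ℤ)) :=
  (false, false, [[[-1128969860, -17869670069, -38061372384, 372272513585, 2067805257402, 1514900036901,
  -6098768497521, -11482543021530, -6003588058722, -14674798538, 427532589606], [-78509083515, -650630979161,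
  -5189605034848, -6046027422652, 26605902136615, 67747261620296, 46910118160246, -996154887892,
  -9116072276831], [-1089367985640, 5195921485363, -16236029240827, -105344098596707, -115415946306121,
  14405736337394, 58425902880724], [-1293474300333, 36788323489424, 80975096695542, -46907582028207,
  -136575464211053], [13306641713467, 31163093778824, 83341781095320], [28986894425323]], [[-17869670069,
  -154631828282, 466186561595, 3081615994758, 1528472761854, -9986708848511, -12630539530414, -1118586309533,
  -1128228074735, -4840746380773], [-3054766335610, -11117643208856, 2941395624422, 53740279351580,
  63992040251467, 2863874337929, 7524562922690, 45144403851134], [-23713195890018, -57807977715675,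
  -45701808901579, 10514969935710, -27778736335884, -135193207954649], [-51897272119174, -28779448127672,
  60550653473848, 122464077549737], [-36576493749504, 20656731565890]], [[-38061372384, 466186561595,
  938253489074, 2206839586419, -1293948157183, -7741193947356, -2055702988871, 6904359374779, 4736291198339],
  [-3749302202728, -15280086829306, 8721564482684, 59514228884864, 13678247058389, -62552260515773,
  -31339580291237], [-22994446414501, -101130836429492, -10106705193386, 172299134211640, 64505427840536],
  [-19085053834015, -125801328525726, -59311698886428], [27621945073843]], [[372272513585, 3081615994758,
  2206839586419, 3894510087282, -3660361851285, -13237847413703, 2969163935832, 10033840074726],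
  [4641607499001, -8137758407892, 2682008383336, 58442921293615, -18691603829487, -82329057857669],
  [16598065092576, -41293331391675, 37455003349183, 194783262933263], [-18799433386130, -110982458875133]],
  [[2067805257402, 1528472761854, -1293948157183, -3660361851285, 712356362181, -2216734623875,
  -7289736223336], [6394631423390, 31789344701938, -10595741223624, 451361524619, 49975392820977],
  [30688082481277, 28039308733614, -89775635530657], [26754792565539]], [[1514900036901, -9986708848511,
  -7741193947356, -13237847413703, -2216734623875, 14348882166634], [3691190963697, 41057571366276,
  7990318281007, -65507435352210], [1849149684365, 46882099604447]], [[-6098768497521, -12630539530414,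
  -2055702988871, 2969163935832, -7289736223336], [-854823851060, -23129236699818, 17066767558756],
  [18688981869117]], [[-11482543021530, -1118586309533, 6904359374779, 10033840074726], [-15309980424747,
  -23550770928701]], [[-6003588058722, -1128228074735, 4736291198339], [-7894895972498]], [[-14674798538,
  -4840746380773]], [[427532589606]]])

def dataS2 : Bool × Bool × List (List (List ℤ)) :=
  (false, false, [[[3395132314, 47442930260, -103014973655, -1348323009039, -1263210708087, 2880623062858,
  6017080724699, 6431505272928, 4194627210409, -984535417682, -1823868350459], [532827682509, 4904295472773,
  4086829479269, -17678854497170, -39720440192722, -45066705353981, -30210623156047, 8236182693009,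
  15875431927249], [835082655869, 21192536536922, 64061035117581, 87695106007568, 65623385631932,
  -22702446344817, -48818832827614], [-3672576900022, -21381660922293, -40520905578675, 23877702473563,
  70977352739534], [9604955915934, -15004052065607, -60818870452397], [17042957195890]], [[47442930260,
  326797735199, 859326445656, -966013353079, -3275739182879, -3617955844526, -46168443486, 3346394527224,
  -624636066133, -2363251577337], [-2971278606998, 2083475433232, 18144083525282, 19124079529374,
  -4031554329172, -14396211052679, 5231297533170, 12361544892449], [-16467887040723, -16233413144183,
  16818556463940, -9197858004232, -16191764828969, 9102676896158], [-20408667494449, 41842951084095,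
  27650237131482, -101531232432341], [-22738956698893, 84674433500199]], [[-103014973655, 859326445656,
  1429477365885, -3037796326005, -4564514782816, -2576810030853, 1809208587097, -492442530324,
  -3889453180258], [-3673519357776, 9279233890584, 23217326129944, 12883862649228, -21759879718516,
  1153308230592, 41672059801244], [-24769881328500, -12883428322410, 67962877905890, 8739750804077,
  -137226645072355], [-40133476939649, -20020690366700, 136954902071622], [-14739322505928]],
  [[-1348323009039, -966013353079, -3037796326005, 6468466672796, 16139288113074, 3712413391243, 624332217335,
  3712247681793], [11116719445777, -14446133019709, -76441401863612, -31150991958784, 2627027805697,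
  -20924271478953], [56047134365530, 57746014266899, -19376938692696, 21983996783526], [5035546866458,
  9026307930810]], [[-1263210708087, -3275739182879, -4564514782816, 16139288113074, 11714900157855,
  -6180476465774, -3180117578828], [10163329872376, -48418051844257, -59448525633992, 27214736953214,
  25072583129019], [56669138159132, -19343290411791, -55598484223652], [20028073604362]], [[2880623062858,
  -3617955844526, -2576810030853, 3712413391243, -6180476465774, -3441913232112], [845055071618,
  -22041868369663, 31094926972801, 23201443816606], [-20941996330724, -39865358422295]], [[6017080724699,
  -46168443486, 1809208587097, 624332217335, -3180117578828], [5410133463692, -4166786133680, 17781932608909],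
  [-12582135056966]], [[6431505272928, 3346394527224, -492442530324, 3712247681793], [1219094064753,
  -580308686198]], [[4194627210409, -624636066133, -3889453180258], [-1128812943066]], [[-984535417682,
  -2363251577337]], [[-1823868350459]]])

def dataS3 : Bool × Bool × List (List (List ℤ)) :=
  (false, false, [[[653099974, -5937941192, -37302400384, -72379887846, -377644182012, -510996740786,
  1757436549306, 4322678819833, 1607249343344, -2410274913989, -1643899568959], [-9862837989, 92204260570,
  1653513939136, 2809270012215, -9570487073538, -28222420873542, -14184483441240, 20700631415736,
  16853589518936], [-859414264790, -3641306049078, 11692510360561, 49825229259468, 41223370637465,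
  -57233260713495, -58460367260105], [-4422748961027, -18545269259491, -38917592287833, 52903465069450,
  77828925502513], [1906259435091, -4462112654258, -40573952556450], [24279914782316]], [[-5937941192,
  -84467638757, -124935402969, 142937211087, 254286308287, 974132222296, 2036330865285, -1326488694488,
  -991842810161, 414593829343], [770519155016, 208422486135, -4519108327959, -4507796239781, -7571787126783,
  12136091292178, 6764401021935, -2210061785920], [8246945160515, 2923827564099, -257749026009,
  -38531364167895, -18049138558244, 6437775557646], [7381104076758, 40225935070765, 40519951762552,
  -20925000043536], [-42395557860037, 15729730440023]], [[-37302400384, -124935402969, 181748521410,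
  -323463420290, -227889694007, -510619891761, 1119451603656, 901262293071, 2392868288213], [273737076578,
  1704836615188, 53319843741, 2553164904944, -12423879913188, -11543167162632, -13250225393155],
  [4616073249918, -2553262232900, 26059398458371, 50098907144932, 7226402138840], [-1574441295847,
  -55607454006288, 23117564875505], [1346882313539]], [[-72379887846, 142937211087, -323463420290,
  -3311919695021, -31522373, 3214601870689, -1012671542602, 1699280196969], [-2855036254232, 9077520152777,
  2161626659239, -16507358171657, 20322244745206, -12216499473606], [-4323030619921, 15766164022979,
  -55297129782130, 12668029905152], [7195280582552, 21022025363689]], [[-377644182012, 254286308287,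
  -227889694007, -31522373, 229083893492, 2743135807355, -7581655869023], [818644259711, 160013257,
  -1350684392183, -17507140993728, 37709081090024], [-5517481716124, 35891840967305, -43674789115336],
  [9064136308006]], [[-510996740786, 974132222296, -510619891761, 3214601870689, 2743135807355,
  6386792430153], [5667437848451, -15350975903316, 3273672260177, -39714816274880], [-11696579878222,
  42546941196590]], [[1757436549306, 2036330865285, 1119451603656, -1012671542602, -7581655869023],
  [611767223450, -2196316483331, 30005085381272], [-19794873698525]], [[4322678819833, -1326488694488,
  901262293071, 1699280196969], [-2972866045493, 794880321643]], [[1607249343344, -991842810161,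
  2392868288213], [-3264453898260]], [[-2410274913989, 414593829343]], [[-1643899568959]]])

def dataS4 : Bool × Bool × List (List (List ℤ)) :=
  (false, false, [[[-283936974, -920139852, 18659878137, 92479180430, 70921088698, -334610363562,
  -1229236111767, -1220041088385, 2031192889762, 4734705757236, 2381555299714], [-25652133935, -220796797572,
  -114598857886, 2455942015248, 8006864164208, 5277117133349, -22437341474715, -45271908991101,
  -23555803215913], [-686515449835, -4959393073359, -11276886759861, 3096768074389, 75700763865461,
  140218472808825, 77951279768202], [-2876223339536, -19360069062633, -76610144496434, -137808687724859,
  -87693521731172], [2069426318221, -6939519466663, -1218665018409], [16391051961239]], [[-920139852,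
  11667622340, 56640743717, 169085496907, 782890197439, 631447493605, -3263170485347, -6187798356622,
  -2659557175977, 259749781229], [-125075902895, -354171908397, -2890454699085, -4991486266126,
  17468579996211, 47192143343817, 26801417127733, 727587844709], [1034830147926, 9561354833448,
  -20926778707316, -112354801594813, -87449277648526, -7763555822962], [2598170188130, 81702536976065,
  96711040450609, -4083723458760], [-15772508976503, 36059007156716]], [[18659878137, 56640743717,
  -490186633418, -937670663234, 2312028220463, 3861490885045, -2049884069505, -6235482868386, -3325157471964],
  [1133457849158, 2764273924091, -8346741910732, -19307470427905, 5961454052234, 42540004269210,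
  33281810989946], [4001436351731, 19307529955230, 2613736651183, -81689475495626, -102646124502382],
  [4053962743917, 41082958020308, 91816389914661], [1410013822278]], [[92479180430, 169085496907,
  -937670663234, -1973534109354, -31599458, 3379590671332, 10288871113970, 6238302798177], [2116447417138,
  6821973299182, 292809441651, -16911330208648, -61733241766049, -49471295798715], [-585401764590,
  20990562882203, 95772574186659, 110602358556184], [-28127134932145, -57784229751816]], [[70921088698,
  782890197439, 2312028220463, -31599458, -3509606692873, -6124743829787, -1721922571219], [-6458305239027,
  78795694, 14025049919502, 33436965418742, 14697860977747], [-11281167864231, -35890784126346,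
  -30921361943984], [5744495311628]], [[-334610363562, 631447493605, 3861490885045, 3379590671332,
  -6124743829787, -1936102684510], [-9833424685962, -16476622378794, 24498960236918, 14046838972983],
  [-12184051880801, -28529251749534]], [[-1229236111767, -3263170485347, -2049884069505, 10288871113970,
  -1721922571219], [7977322986471, -31974989151403, 1084514073397], [12102839502811]], [[-1220041088385,
  -6187798356622, -6235482868386, 6238302798177], [17995925456687, -12034357180299]], [[2031192889762,
  -2659557175977, -3325157471964], [9715650819695]], [[4734705757236, 259749781229]], [[2381555299714]]])

def dataS5 : Bool × Bool × List (List (List ℤ)) :=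
  (false, false, [[[0, -56081293423, -232509842265, -272702515272, -1858521085351, 1508370752878,
  11726083109623, 5229386211965, -7982152141290, -3725693774811, 1002360314131], [2604483590256,
  3657974667372, -2442775971064, -27994943796375, -64563729962130, -5589068492083, 73358837280463,
  29655622113316, -10723178750809], [20057223403880, 62073103703977, 76629769801425, -96292657323662,
  -239341694556701, -77056417237480, 46257997835645], [17248223810466, 210929411091398, 328024266318805,
  73442705366876, -89982910217035], [-94598912237194, -25425553669166, 50221566150185], [-11331084205958]],
  [[112162586845, -1069731952863, -6603927485653, 8014096593422, 30925579025076, -4255791505389,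
  -37292971494702, -19559177001168, 410028981240, 3982875981471], [13207854971306, -27923069383553,
  -128610425079512, 43927581788471, 238770177195598, 127597167708177, -12003472706949, -32539605050821],
  [95883438368570, -92642416151847, -442126434052558, -273198964691402, 36864765325119, 88295361164045],
  [215233094493261, 230200042907760, 19866749112272, -80154479409712], [-17946513318240, -6562180999161]],
  [[465019684530, 3764060364098, -2010272474822, -26040497612030, -1706159732604, 45398895524696,
  31555011389065, -3212446194978, -3423230979207], [11782104156219, 66013461656088, -31457636704608,
  -181510725407955, -96205502178918, 46756951461948, 29833008190056], [73152231804841, 81191925388694,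
  -101750653358767, -115001433769071, -79011070121147], [148741847458384, -25126664200243, 56403040194239],
  [16503607038357]], [[545405030545, 1862763719048, 32868517768396, -8823522916502, -81206940897462,
  -21894027800341, 4779335549280, -17589176793201], [-55920817578378, 68170430224852, 315956833756004,
  32054692330851, -32919353132311, 87600909358368], [-125969430950823, 123222323286533, 62644603968622,
  -58495817640510], [-23359800128973, -78355638793763]], [[3717042170703, -10472488993093, 7440063135348,
  32017669279092, -16912774389568, -3378906030820, 12033036627214], [-60177374793750, -95096462362106,
  143062913354692, 1090454451692, -78493852062639], [-158154197895044, 42857539986774, 127341227864054],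
  [-37469704109252]], [[-3016741505757, -1536977190221, -30978006191892, -2145499586339, 10531157634329,
  11826584945276], [31931315929015, -40732224221403, -48116633458619, -51721481725740], [-69597585780980,
  30609631505437]], [[-23452166219247, 6276336503028, -8866080559010, -2749742024239, -6190585366108],
  [36366303718021, 7654657417486, 47733466871666], [-66596444749480]], [[-10458772423931, 10057556851028,
  6804484532453, 9989867323318], [3837512649159, -36318423467597]], [[15964304282581, 3465592878746,
  -2155550985852], [-2301455593125]], [[7451387549622, -3283300371969]], [[-2004720628261]]])

def dataS6 : Bool × Bool × List (List (List ℤ)) :=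
  (false, false, [[[0, 85211156675, -104444170823, -2144236157642, -153195329317, 9136328900490,
  6090458357448, -9998178848720, -11390480369610, -261238717186, 2393695114876], [-3065197900650,
  6588781640862, 20653495277949, -39759022488044, -70309739912768, 53169549707107, 91570464000455,
  -2328447097898, -26460269193567], [-41126804724623, 21832660815775, 194833187165568, -39398814524315,
  -234829744921001, 28483730941702, 111295967241260], [-144489072575952, -72596909027684, 240343627885319,
  -71676990416590, -220590622450633], [-112029791416027, 46046461227106, 186967922723816], [-5930219258106]],
  [[-170422313349, 1637043121148, 302297923167, -16940255678725, -1377325620583, 40465579934964,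
  17602566326996, -7356721192832, -3705766515103, 486490665972], [-604595846334, 49061479877740,
  -2392661165490, -206388978502155, -101201562806382, 55412774526336, 29502354444162, -6398165897322],
  [5374503880690, 213310181863877, 172005092720908, -129136332185563, -75119897649904, 35791024537720],
  [-22572554653174, 103417587929340, 55821567137971, -66481541000631], [-40209806956352, 17519325978311]],
  [[208888341646, -458371091102, 369493072314, 10428826004893, 1719090031159, -29239647177217, -9400093641470,
  -2331178094411, -9996565413419], [2779588172241, -27449091927784, -15991559176609, 112379207428048,
  67733683241192, 34113305910553, 76481466122777], [21668578166266, -16425807524962, -138099884948546,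
  -159251868908788, -169261048266319], [16129437015270, 204762740120875, 99412545034248], [-20764738176349]],
  [[4288472315285, -3100458281956, -4347708361440, 27435985286232, -8271485471806, -92506621804606,
  -19048964219907, 15295613228502], [24499344018525, -71991802513778, -53848357912, 449881803095821,
  103525842106916, -115634889486730], [-6894076427377, -403744138109363, -100388743441028, 229932947721265],
  [-39398281361308, -67583423032645]], [[306390658634, -4545296393825, -6670192907374, 17305600706567,
  3122675517505, -9062311105310, 5108630799703], [21462543469415, -49335110061985, -12490491029688,
  69632868403461, -37113577779554], [22578042166015, -132804615040975, 75642946217461], [-33203018274502]],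
  [[-18272657800981, -6698590166885, 12752468989118, 55791914294637, 7621238502886, -10686780854967],
  [-34332608289423, -172145259672919, -10071379154024, 46548731396398], [49695485968040, -15527444384821]],
  [[-12180916714896, -784864093062, 13740504908826, 19148741227512, -54471624050], [-35312462170672,
  -73374049524389, -10193830402408], [1266656759915]], [[19996357697440, 6910100149258, -448829343291,
  -8836670590649], [1185214039910, 21483541725080]], [[22780960739220, 8385362067680, 2666471551283],
  [-1293443295412]], [[522477434373, 2036827378837]], [[-4787390229752]]])

def dataS7 : Bool × Bool × List (List (List ℤ)) :=
  (false, false, [[[0, -16434598950, -76609493291, -96645366914, -613513800119, -854052488771, 2405883338328,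
  7325434441201, 4820663860734, -3124522986591, -3312085481669], [811709083858, 780117418174, -2699951164418,
  -1902685449921, -3201429605284, -36657193914140, -38305854382442, 30105409277517, 34762502730959],
  [9043481820608, 10068817461116, -24213976440214, 32250465884143, 91305806841882, -95068841619642,
  -128404242418399], [30378007945177, 31401710873016, -64074108711504, 92513061367691, 198986712399533],
  [25630657281089, 7897000567160, -116076998947602], [-14978772788782]], [[32869197901, -329245048638,
  -2552235152223, 2007097683946, 11652449041693, 1580812159168, -11899586019696, -7139767257099,
  -6825649923740, -4238515142440], [5104470304445, -8570061950762, -40015865749673, -5879643128946,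
  65398589488873, 50969765116197, 48997507335909, 33242128630358], [32322298043503, 6474929798891,
  -114405955862724, -117215450295713, -103647555871505, -82439710387782], [48382312077349, 76875167269722,
  56633142525259, 81032217032393], [-5197314292927, -41026174375657]], [[153218986582, 2062053834791,
  18751654472, -905813596659, -4481901602128, -6896522902050, -5720845335673, -10794999716210,
  -2823702876410], [5060034488902, -8385189607180, -8068214965986, 42720389529485, 75759226251523,
  65193321166084, 11128039804904], [43027839544739, -52250098489418, -186637902983537, -92303058392126,
  16724126536893], [89672232596178, 8254740414327, -66151654021952], [27798496785339]], [[193290733828,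
  3146908680948, 5085577373015, -5429572099804, -19764363368016, 3481503149664, 15327159685731,
  -3353534919940], [-23359015580224, 37640415670171, 92072345026459, -2442126445814, -76499175883479,
  798356195562], [-79450192001890, -55756090871581, 59215845255115, 54596679644579], [34020171076020,
  -63044462974866]], [[1227027600239, -5479501147917, 5413346388556, 1792988541938, -8323331755954,
  6991572137290, -4891586624360], [-14875528110905, 17688647557633, 33293324175232, -29127004478914,
  10722141453516], [-77819301789646, 28884968225252, 20114462195241], [10559127942432]], [[1708104977542,
  -12814682583853, 4097903323387, 17729842, -1738769013767, 11283847434126], [3802046611838, -29132470313197,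
  -3277839524266, -44886825836754], [3051186335383, 24119687745134]], [[-4811766676656, -2721261154571,
  9271576687894, -2249676909449, -76829533379], [-20525942008793, 17901417296510, 12100612011513],
  [-32597616476427]], [[-14650868882402, 6880310753670, 7608803910500, -1107541635761], [-4002223712975,
  17115563216784]], [[-9641327721468, 4840947525540, 2171770122245], [5465475058721]], [[6249045973182,
  2596867228172]], [[6624170963338]]])

def dataS8 : Bool × Bool × List (List (List ℤ)) :=
  (false, false, [[[0, 26181379850, -191076245199, -1760402429637, -2370593886588, 6183166028968,
  13987210840073, 2764493590050, -7103577712105, -1739051319591, 1141483917420], [613640335312, 5487264209203,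
  7196065868842, -35485724361097, -79266543401789, -6191305010358, 60920969301251, 12791952407473,
  -13640153716681], [253993414135, 41504820275843, 101987874677440, -22121401229107, -153242885769989,
  -26026438591677, 52709355996697], [-6611873047907, 41961890734062, 100901747744679, 3859003149013,
  -65892703189651], [10468074897779, 20077620178557, -8272795616460], [17512389131459]], [[-52362759699,
  -115743922457, -996069453321, 2773740213477, 6483512426404, -5779804090382, -12151025953348, -3629979424636,
  1834997455607, 2353422892753], [1992138906642, -9012014435035, -24759338280344, 29463525887889,
  68877179329787, 29357433294102, -5316544570065, -16044369198244], [8807046542383, -32790837566921,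
  -93243386848774, -67088116672182, -17566837235938, 30588442151201], [16404684107616, 31976251692545,
  50587505514400, -2203582510870], [-12333291792318, -36251875773877]], [[382152490398, 790012533030,
  -211280916145, 1147588484742, 6323294384182, -14368358962130, -35084732296081, -7669500630991,
  9887390298713], [1804149421497, -2537487724285, -23689194672534, 75472456719576, 199579431128839,
  34928368045959, -82857649765543], [9438623039979, -85142677279357, -275512489886816, -16075052855940,
  212882252893948], [47656736236462, -32119065480681, -159425770018198], [9135193894824]], [[3520804859275,
  -487430535967, 1973104033026, -754416348847, -14691665496985, -3944609575480, -12692483814465,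
  -19543094427108], [-6295630916594, 2857566989421, 58686428327029, 22486064777192, 75914568645342,
  112452567145296], [-24405070188283, -24218947233896, -116064491031221, -155298992772892], [30491246479701,
  22630937389997]], [[4741187773176, -1913618210147, -1053158055556, 4249752902084, -6991600972441,
  -5282292764485, 837134982752], [977305239154, -16379861785324, 27966432235211, 23631650666394,
  -2185768819503], [-7051759010416, -15785485013903, -5084697873854], [12038657858684]], [[-12366332057936,
  1123082451735, 9391919851984, 217269864, 5294181062584, 3679557141616], [-10725886923361, 7458828957085,
  -24268235542565, -19234987538994], [21756836463533, 21418179414119]], [[-27974421680145, -1009124166641,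
  21701978197499, 16414983912558, 4503118917773], [-51299111038299, -32400639467375, -5157779899924],
  [-1869719036103]], [[-5528987180099, -462368179777, 6758119875638, 14125895613235], [-32243109900863,
  -41620241366482]], [[14207155424209, 1024512013240, -4842292845865], [-588287981343]], [[3478102639182,
  -128108350273]], [[-2282967834840]]])

def dataS9 : Bool × Bool × List (List (List ℤ)) :=
  (false, false, [[[0, 5779277605, -56781435104, -454516892735, -608958266168, 1218728907878, 3415638544702,
  2654715391834, -59577280497, -1996442998798, -1264103692480], [453685748640, 1100562880383, -59576036871,
  -5898879728274, -14967644925883, -16386611035646, -443806612844, 16661143314284, 11425135934824],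
  [3259457590637, 5198461718082, 5830477510053, 30669941215191, 16402592054841, -49395315471218,
  -44137338466248], [13145212161661, -21385571510389, -54865840676389, 63722295870794, 98241272201266],
  [29029902140854, -20991153570633, -99424061566776], [-2796181378654]], [[-11558555211, -170061439216,
  22360875488, 1283013512668, -392270480009, -3460774363844, -482475506149, 4972415845089, 6329732513167,
  2285723158292], [-44721750976, -3717645267782, 2560702404446, 13927229402555, 4234285164114,
  -24529989081925, -43832000926938, -20558513591566], [-4833162776603, -5619816019050, -9700014129713,
  23416114669604, 85157600931579, 59190292813979], [-16663516727220, -3378152857695, -32842302293928,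
  -58539759972176], [4423562251916, 19132648639297]], [[113562870208, 240626922335, 256722040056,
  1034556109650, 154421789975, -8362512859330, -12071560526721, 10327204650596, 13475886076299],
  [-776234620554, -2070977905069, 418037381171, 36425426254318, 64536561933490, -67014505869567,
  -101954448478435], [-1762605502194, -32748834256914, -77812736085535, 116426195862083, 234531391985255],
  [22356579823235, -29860495945692, -164256102170517], [21454089568823]], [[909033785471, 1212395588875,
  -723667721691, -1656534260255, -3408264220005, -751225780531, -926959891780, -1100267946481],
  [-535905525440, 2379749689516, 23786728942491, 8151168362496, -3680270319006, 12505494267259],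
  [-12928504390432, -23200881641522, 11813692352031, -39915151514121], [16993435045573, 28434102917216]],
  [[1217916532336, 197505668892, 2651102232973, 3735083727078, -2333615612715, -20918193368954,
  -13672036834763], [1451080367382, -5818107073408, 9334568081045, 96528056526549, 69029135205604],
  [-3187649981014, -74315644305152, -73212634756763], [15222769133923]], [[-2437457815756, -2065411978486,
  3876603593847, 125138065, 13107415887969, 6869027848457], [-10432071442132, 2705523805799, -47960742147841,
  -25211492541896], [20827060614353, 8235147328293]], [[-6831277089404, -1713921201045, -27997132,
  1998443676127, 7845249660906], [-20553787673129, -10669363451603, -33868281256904], [20406042046316]],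
  [[-5309430783669, -4051990988267, -5687944422645, -528336534736], [-2235829511500, -1834361899294]],
  [[119154560994, -5022888838270, -3854968927030], [7683948187930]], [[3992885997596, -1069822168313]],
  [[2528207384961]]])

def dataS10 : Bool × Bool × List (List (List ℤ)) :=
  (false, false, [[[0, 838337380, -6516142412, -10496416381, 221224523483, 401837494052, -689340728138,
  -1800063333260, -467880972113, 1028064962558, 563125544761], [-47572572446, -13290593898, -566394831670,
  -1571657087024, 3880835194403, 11562125349285, 3133345462532, -8472375811257, -4874738869555],
  [-208531419758, 930417078720, -4706160607015, -20392484439414, -6797859428420, 22564496418061,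
  14217149378663], [-796066949167, 7679706983433, 6267171370543, -21233459739221, -16983717298586],
  [-3323651587475, 4814595098740, 9970052187630], [-2000632270555]], [[-1676674760, 30302428635, 13742983086,
  -349302983416, -188645972668, 1200645863668, 1085417385440, -1184942730915, -1830697084526, -576184090649],
  [-27485966172, 974314502300, 860873128180, -5955502526364, -6323743154708, 7806083296463, 12177214509013,
  3461779373671], [-281624270378, 6262135292132, 9013713172257, -14818138009100, -22248365618989,
  -3858419098239], [-1143021790013, 7957738404870, 8139844847418, -5501127148324], [437828383531,
  6822528334765]], [[13032284824, 31036859955, 6986971099, -71356163983, -71914528065, 1066926109459,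
  1098447554430, -1843602477362, -1769566778299], [133214953696, 59945416963, -673022290882, -5987286306127,
  -5357032319945, 13301605328232, 14166932580837], [1777531750154, 8053517396160, 5423762644956,
  -28882944973933, -35512915485807], [1201861686783, 17847400974617, 28170018324286], [-3437302661344]],
  [[20992832762, 30799721153, -162464594184, 355095779771, 972676546374, 125428120126, -465311572687,
  75636634934], [112350713351, -506693285887, -4215852853020, -718302999463, 3552269570114, -139130035787],
  [1073807283050, -37444275684, -6823405754980, -335398667052], [1639425543014, -114204794943]],
  [[-442449046966, -248884410568, -405154720459, -93967040318, 830612107088, 237788933184, -924382549038],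
  [714855856970, 934555544761, -3322447789695, -500353979847, 4451340037906], [716529573617, -971358954939,
  -3586731020137], [-1318089343829]], [[-803674988104, -945436689242, -683738418012, -9276645, -883201,
  -528036148692], [989954520161, -562106300701, -45959874373, 3437097435697], [2273065762707,
  -5114856816646]], [[1378681456276, -47099401905, 6317961, 438724403115, 360971171065], [977019003962,
  -1267964264394, -1338891686047], [630335932038]], [[3600126666520, 1794645045286, 1575398086005,
  522807367885], [1785928162384, -1210229712184]], [[935761944226, 1050488232759, 1209678841828],
  [1028397200689]], [[-2056129925117, -180332487407]], [[-1126251089522]]])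

def dataS11 : Bool × Bool × List (List (List ℤ)) :=
  (true, false, [[[0, 0, 0, 0, 0, 0, 0, 0, 0, 0], [384702154966, 1135504083828, -1708711101668,
  -5627285213933, -307301587089, 2968878972528, 381736291167, 644906435255], [2385314670583, 17884506399625,
  5601240141762, -24952572999614, -12509067090049, -6962062725282], [1142090770443, 50785558505998,
  25706355040272, 8665412300060], [-13890985162606, 2747590335007]], [[0, -384702154966, -1135504083828,
  1708711101668, 5627285213933, 307301587089, -2968878972528, -381736291167, -644906435255], [1135504083828,
  -3417422203336, -16881855641798, -1229206348357, 14844394862640, 2290417747002, 4514345046783],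
  [-5188599942435, -3462650734226, -12528184989129, -14599507425179, -13244292778886], [-10456974842110,
  41467350891292, 7716422220584], [355826313463]], [[384702154966, 0, -676603568915, -6629935971760,
  -4679335380494, 13077057109502, 10600385634215, 3092624113754], [676603568915, 24075757099888,
  18422561636975, -57593317284049, -42219783657564, -14985048432456], [-9063890875987, 49801349020586,
  31255880264760, 16643456137272], [-5791667499046, 7457857347509]], [[1135504083828, 676603568915, 0,
  -6128727738026, -15724807369409, 8385219609373, 10154148507501], [-10815885156368, 12257455476053,
  55315187076825, -51916995137097, -41326011655345], [-23865572338008, 67881318605670, 23474433346199],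
  [8406847426985]], [[-1708711101668, 6629935971760, 6128727738026, 0, 11294082846597, 5703208597716],
  [-10513283233520, -8140764968599, -33882248539791, -17939532507487], [5320656468257, 7363022026394]],
  [[-5627285213933, 4679335380494, 15724807369409, -11294082846597, 0], [-10439718523369, 40964282392799,
  -4873301883377], [13989566935702]], [[-307301587089, -13077057109502, -8385219609373, -5703208597716],
  [-2396924904136, 1961686313271]], [[2968878972528, -10600385634215, -10154148507501], [6583452257435]],
  [[381736291167, -3092624113754]], [[644906435255]]])

def dataS12 : Bool × Bool × List (List (List ℤ)) :=
  (true, false, [[[0, 0, 0, 0, 0, 0, 0, 0, 0, 0], [54091742207, 300555162210, -57080777219, -2801228808768,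
  -2771780701328, 5418902560284, 9001487904036, 3237647632896], [-493252819050, 5257471916319, 9659515516047,
  -20945245372756, -45159898807026, -19270895205018], [-7239946338905, 12244235531285, 55912002328773,
  33830826439673], [-17378246775911, -20817077399468]], [[0, -54091742207, -300555162210, 57080777219,
  2801228808768, 2771780701328, -5418902560284, -9001487904036, -3237647632896], [300555162210, -114161554439,
  -8403686426303, -11087122805314, 27094512801422, 54008927424215, 22663533430271], [1964969505896,
  8252200710240, -30632623212967, -91473520888314, -50642614479886], [-2184002954100, 38923154075645,
  45947090180650], [-17884968497481]], [[54091742207, 0, 550333596270, 344985701216, -1344173412062,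
  -730364868382, 152459286846, -154990592357], [-550333596270, 146287900439, 4095661629931, 1040667324787,
  696345413725, 3007843540593], [-1407314805807, 1570489692334, -3461169822789, -9861505869369],
  [-971604992387, 7304056848413]], [[300555162210, -550333596270, 0, 3123992225515, 2551742412805,
  -1445697044019, -2074312480144], [-836259302871, -6247984451030, -1933113872771, 5782869412486,
  3034648508375], [-3170370952840, -2059466051378, 9114472276534], [-4812206892564]], [[-57080777219,
  -344985701216, -3123992225515, 0, 6778602541009, 4182833684668], [3060850831769, -5722113365645,
  -20335807623028, -11498827752881], [4500814987513, 2083487082422]], [[-2801228808768, 1344173412062,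
  -2551742412805, -6778602541009, 0], [4432534561545, 13557123845610, -5232506985791], [5682901505428]],
  [[-2771780701328, 730364868382, 1445697044019, -4182833684668], [-2904338891974, 15702581261682]],
  [[5418902560284, -152459286846, 2074312480144], [-4152212466593]], [[9001487904036, 154990592357]],
  [[3237647632896]]])

def dataS13 : Bool × Bool × List (List (List ℤ)) :=
  (true, false, [[[0, 0, 0, 0, 0, 0, 0, 0, 0, 0], [52567992597, 210230194191, 221450076267, -705267034312,
  -1684840312327, -858314442389, 20599295, -17874597215], [-564676813608, 1754533977280, 7625903751926,
  4867255212250, -1661499222151, -1487182804640], [-5082996609152, -2435757328300, 11099194479289,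
  9075858978839], [-8085557701335, -9264333228390]], [[0, -52567992597, -210230194191, -221450076267,
  705267034312, 1684840312327, 858314442389, -20599295, 17874597215], [210230194191, 442900152534,
  -2115801102935, -6739361249309, -4291572211946, 123595772, -125122180504], [-593807643257, 4403828241690,
  7355478450519, 469132430595, -119459331439], [-6829020086554, -938541634712, 4086660928108],
  [-7204193828298]], [[52567992597, 0, 343226737341, -343999908656, -2571382814944, -1433997442693,
  1661396225675, 1594430387929], [-343226737341, 1987074494881, 8364841140125, 3530397974587, -8776319551922,
  -9179004037912], [-3222075510236, 109191264289, 11376392624695, 14393990720641], [-4442508112665,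
  -4990084295678]], [[210230194191, -343226737341, 0, 826773481880, -3007180884253, -6114882206493,
  -2876883399272], [-1299074677569, -1653546963761, 12786656500739, 24459476010767, 11281744965088],
  [-6772294732234, -16032767525628, -8178186688870], [-886244948]], [[221450076267, 343999908656,
  -826773481880, 0, 309258669872, -1201226345081], [176080786589, -3765113847981, -927776009616,
  8536723484903], [-2002514793569, -11067315244402]], [[-705267034312, 2571382814944, 3007180884253,
  -309258669872, 0], [-801589088069, 618570154949, -3731818104580], [3956720491631]], [[-1684840312327,
  1433997442693, 6114882206493, 1201226345081], [-5645543782944, 700219341109]], [[-858314442389,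
  -1661396225675, 2876883399272], [-3264461688934]], [[20599295, -1594430387929]], [[-17874597215]]])

def dataS14 : Bool × Bool × List (List (List ℤ)) :=
  (false, true, [[[824104704, 208745461677, 678896169325, -848090085699, -4059598744717, 778818859237,
  6121004443143, -1923838311298, -5079601320915, -574419106113], [1162259904801, 3183380309331, 8873846657380,
  -8700012356128, -38211670433632, -3391315715032, 38966135605685, 15215814485754], [-4646298464347,
  20170355956043, 80113569381053, 70236846667557, -86449324450674, -83057947121905], [-31594859323189,
  -104910535208992, 39703099475868, 153036099322084], [26157921621826, -84560499642345]], [[117593133143,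
  3205662186072, 4145229070124, -10422521038054, -22381890678237, -1024419263536, 4651667953935,
  -5804628894674, -1746340240218], [2929029901347, 16286346273826, 68979620225637, -7051486004110,
  -19609689366966, 34622373698671, 11539261440420], [-5977887723635, 92533213356025, 29951372781893,
  -48158263277553, -2215813678087], [-62245409855177, 14093633885899, -76154623873903], [74643857164746]],
  [[758260479800, 6898244606852, 1229390785131, -18320855912294, -26039424613148, 3785536238515,
  -9382526270015, -7069406728018], [-6057474803545, 49562829026779, 119648330118625, -59657640261700,
  48001479460960, 50489202434384], [-33698537568359, 132538104851819, -24950142515034, -111197178933267],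
  [-67599130827276, 82195112979666]], [[3116742178355, 1778448921959, -6565406936888, -1046176873451,
  -20737310042974, 2526590907893, -10990530279498], [-5242400171188, 13497154435439, 77526725589729,
  -20076411594679, 87660174985691], [-36755776661196, 32207988762212, -181945247232117], [65042670995446]],
  [[7033602656035, -7837159697295, -15004662091983, 2786336627263, -16989487154884, 5280319576200],
  [30639420616571, -21668202451877, 72926710652912, -28950933170419], [-47496142772401, 30917410325094]],
  [[7406243243735, -6290307863199, -13432050049195, -1643927556098, -6696032140552], [42493959937348,
  -1410123968400, 29770619277165], [-18350142423900]], [[7607828828740, 7276425489444, 1254575447582,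
  3631243692901], [-4837076784851, -8308335961633]], [[11700972635108, 5426747644580, 2989356447371],
  [-19275109127994]], [[6519190886631, -5810480493423]], [[-780632943787]]])

def dataS15 : Bool × Bool × List (List (List ℤ)) :=
  (false, true, [[[-255232968, 15013381031, -32662156078, -456126390872, 504405981359, 1381820130462,
  -1609887341938, -944828699916, 3185319576185, 2053699261107], [-271721496531, 1340676771716, -1366782047019,
  -6334472889520, 9026046969157, 7405103223067, -23511605191257, -18100505171415], [487076410375,
  3382786228125, -14654438595625, -16174736720429, 53526850486367, 53325594807452], [8783796013210,
  10985683151969, -40136257593157, -57425575243072], [9794862380560, 10068656257458]], [[10388857928,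
  93798503825, 756681042126, -2357288243760, -2295172632390, 4146442789394, 1431651913828, -525132812831,
  2621335284078], [-3635208920146, 4702464543261, 14184011566714, -13180738567855, -12443929966220,
  6988181962492, -15796895247860], [-18553601166426, -1922231173646, 30998877763897, -24264649357392,
  21924762338986], [-13874470967831, 21686966326327, 6497584222156], [-9903401407137]], [[108972643569,
  244115596287, 482698462740, -746736325369, -4804887378896, -4234204531303, 2705269906102, -5760307845748],
  [-3069814186510, 238061169106, 24585106852911, 30923571197100, -15763947082332, 40152329736144],
  [-28477253927415, -51622029812688, 25158010159252, -78886222879543], [-6409040756120, 35563051171388]],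
  [[-207604440930, 6034940200513, -4596307973523, -4860714677582, 21071531060, -9371833679900,
  10720549089583], [10805883471612, 20762873984526, 5161607335206, 44665923940745, -62948334920451],
  [-14544607211135, -38340603404384, 91013088410340], [-17454197770795]], [[-1604515239682, 19281738148377,
  -3745943427625, -6677374173286, 5301497858473, -7647653670729], [12401018168236, 30325018524233,
  -13381173562205, 35655595495134], [-3948275716212, -26861714520622]], [[171213069436, 21075075616614,
  2102352048065, 448078508498, 1008302589300], [-1665591216313, -3105336314997, -1242619391723],
  [-255525163189]], [[4049215706375, 5116140348780, 1946066374529, 2512052056905], [-2059290118086,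
  -12452174119251]], [[3531436068332, -41364171689, 1630452452586], [3387467178941]], [[4829879968455,
  3778150060833]], [[4285860273147]]])

def dataS16 : Bool × Bool × List (List (List ℤ)) :=
  (false, true, [[[6428771986, 99401968933, -271896890999, -2860030389566, -1370361174988, 8657662204541,
  10719874932240, 2604326477889, -740064942461, -163442270051], [-314950449568, 9276282578085, 10803946267502,
  -44508687588437, -76180850447383, -23060102168951, 7472469551058, 4183657348871], [-13268063686834,
  41638310084847, 144563044694999, 67762384480502, -28532203474102, -23831038592263], [-52464957981266,
  -51477100473354, 48963291845984, 35898288725124], [-16620410752181, -2128865233969]], [[27268315432,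
  1360715050238, 16050488737, -11506452655863, 488076432707, 20583282963770, 565871756739, 1223170092318,
  7287343812547], [-3134300835793, 29418238470980, 10917311133288, -99141758741180, -20529386140266,
  -59155358050, -50797046981688], [-19056252359826, 91592477359079, 73998748103144, -19597903270679,
  94938535286560], [-34560915811882, 23074740562899, -33082361757619], [-3719047958379]], [[-133800598678,
  3976791156211, 2511890343791, -15615526399065, -8259357915591, 12091272359239, 1121903171751,
  -6987464935913], [-8677134830058, 35758383450074, 46459824419025, -59839741075381, -9183168412065,
  57128952045365], [-35365010291950, 58322837178003, 27931534235723, -134280943390654], [-25835658478610,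
  85135104939651]], [[-973053078883, 6522524973286, 2523796743110, -7884601747082, -1859801753093,
  -8605943464045, 5711925312226], [-4691376388733, 22091702157993, 5582592577918, 37025918535140,
  -31243385532913], [-7738508584474, -19826684981516, 32749897853675], [5960065346483]], [[-2841109061574,
  6656681605363, 919201978300, -3849122643129, 9513078044604, -1045281366342], [-2703991035104,
  14940327093455, -31468582808731, 3608410641379], [6098183053025, 1933863173054]], [[-4602982127418, 2283207,
  4858409391498, 3327069570189, 662795268553], [-5524200215281, -13505530367170, -1437084230100],
  [4901563404342]], [[-1577604742461, -708430876139, 7010878663625, 1209108440516], [-10205098693724,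
  -14747142471573]], [[2582070640616, 2282122854175, 794868548809], [-7695740009295]], [[-2217097814627,
  -863275171740]], [[-4406045361633]]])

def dataS17 : Bool × Bool × List (List (List ℤ)) :=
  (false, true, [[[2853173169, 15015693251, 20729688039, 52087586423, -319708681874, -1502487479422,
  -62026748954, 4114398457840, 3778298573219, 735942144896], [104415967662, 130571291696, 1404761655692,
  6124433824622, -2358440808369, -29168044653707, -29471390433095, -6402688863848], [-1384850842167,
  -4045784638719, 11918520719657, 60168445781529, 69852268275952, 18221721062401], [-7689378057482,
  -29901254868499, -46644642891654, -19899003696800], [-1741968964834, 9626571001176]], [[48050572336,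
  338778293996, 64448379654, -1579062182562, -722760873011, 10315897, -772273113270, 3893578281432,
  2806866485018], [457656242389, 4838026741748, 1983190634853, -2114224068682, 1690157887224, -26113011207357,
  -20636689908309], [3022153813362, 6342583111979, 3227119867572, 49664592717298, 45701455171102],
  [2204246638466, -22527704032117, -28245732985106], [-3327140740625]], [[-305778754525, 503292676076,
  648649557251, -4905946432264, -2852074222365, 4276992889545, 876315178785, 1636884680184], [-1037055074284,
  15299913086403, 11871087255926, -22413091485300, -5813479565650, -9130666552692], [138783410395,
  25393320479174, 10250140332768, 15494432003394], [-3021504225462, -11053507908891]], [[-2219197717832,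
  -2219240991688, 3343119738011, -4048679834804, 247141517952, 5254586766713, -1083322287793],
  [-6714178957851, 15993906617445, -2783287469759, -24268624863128, 5164088413857], [7868159491692,
  23334684043141, -2331683742158], [-6085735715538]], [[-1669405542827, -4863702826983, 8362165403738,
  -690437879600, 4872944072780, 3020907887222], [-19851110000843, 3945804151785, -24285128911301,
  -11567598858502], [20294906365135, 3834977256774]], [[5755909439926, 13047783, 9826535438077, 1123846387271,
  4005548590670], [-24664814965716, -3137488334778, -18535433840010], [13597531798826]], [[7656189645625,
  4318809235635, 5488487227167, 665175382914], [-11162102503913, 8895660183]], [[3140732112746, -232056119354,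
  714505790969], [-142353062889]], [[6531906350306, -2099386432818]], [[5773262013446]]])

def dataS18 : Bool × Bool × List (List (List ℤ)) :=
  (true, true, [[[123411990241, 134856951133, -2010932631150, -2411076641401, 6052204730106, 9225330293246,
  -928872912603, -4231835137056, -473199234149], [4552074745467, 7625131745602, -22904168604632,
  -53058672360582, 2422458035089, 33884829523227, 2374613176571], [10382720736058, 69047342900672,
  4651423865666, -69636585355820, -70388412509], [-24699809955628, 5687617589561, -3059381269164],
  [5583937483541]], [[-1772195233030, -423635700340, 11193707076405, 3460173089270, -20843262136593,
  529820677174, -407784764277, -10325005246173], [-6403052348691, -18289414740282, 56313348210028,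
  -21313287306104, -2860117820320, 57598784561103], [5815208523197, 79626834834751, 25355637885448,
  -84426758411778], [-55389788373237, 32926730486379]], [[-2014043218148, -5130582527719, 8019739286057,
  27349826253418, -13891444094281, 1445928433005, 7010193882951], [-22750013569619, -88203068593174,
  72644089747928, -29094723235233, -26533891892469], [8551605029368, 34970042103036, 33886760959306],
  [-26293488946250]], [[7675562723880, -7343493190463, -21501732949813, 19089734425146, -9409664614142,
  6244730675184], [6250795111927, -46426205697039, 47357059685134, -42382924837403], [-24240014762240,
  54430243207800]], [[1039068521470, -9401218924871, -16926063036553, 2936094883634, -15720279267051],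
  [37787234410539, -13572511496486, 53572939154703], [-20820380804726]], [[-21676237849448, -10895792784504,
  3599007938695, 8268732051294], [6671068327541, -26715985573867]], [[-14180674226211, -6104807372310,
  -6066259499052], [878924869478]], [[-346209752661, 844959390650]], [[1370949718687]]])

def dataS19 : Bool × Bool × List (List (List ℤ)) :=
  (true, true, [[[-129407301437, -128617787211, 2104776602635, 1257180763189, -7171153968713, -3563727126748,
  5958749578770, -1994294472210, -5227559593037], [-4791956456066, -2518307982416, 27426073847143,
  17598007130148, -26805669849661, 10749617447007, 32832930332696], [-21562071181358, -25085291604068,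
  26593836816468, -11993933099341, -54457684114210], [-12141398314843, 1084137690198, 8003683707119],
  [14576349135586]], [[1838537441640, 350835402218, -7742732055193, -2258247875576, 5545336645972,
  -4398785278418, 833603992557, 1099475449408], [6454143025155, 857103039211, 2930211658693, 34484177111687,
  -18093086623257, -8402325197401], [-31319672236369, -50879077838827, 59360469894616, 17772528889281],
  [-57656034452211, 7737209648568]], [[7072860781619, 6411724844007, -23502166540526, -13554247026542,
  13159503023498, -14769341031543, -812068151820], [49363241170375, 26198368981704, -55166536903818,
  69597534058569, 1171279727109], [28847441737623, -66084765243579, 11102809052058], [-16576272374833]],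
  [[4207577696563, 23601826777622, -11616423645016, -4264916108040, 7963068639837, -10572548967260],
  [49554911366857, 11656712698499, -28069529107814, 37753458701903], [9288138171640, -28044579708851]],
  [[-10744808796862, 39552017336526, -7152664991238, 8780290114707, 2926120671991], [29908309694209,
  -28596977299383, 2685127999103], [-13208594956340]], [[-21887689493073, 14484874143690, -20888920769079,
  -2691214755846], [37259553813859, 4212567530254]], [[-16456300620274, -8839493607094, -3506554281706],
  [19016213965292]], [[-566795472134, 4863626807513]], [[3294955811154]]])

def dataS : List (Bool × Bool × List (List (List ℤ))) :=
  [dataS0, dataS1, dataS2, dataS3, dataS4, dataS5, dataS6, dataS7, dataS8, dataS9, dataS10, dataS11, dataS12,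
  dataS13, dataS14, dataS15, dataS16, dataS17, dataS18, dataS19]

def dataR : List (List (List ℤ)) :=
  [[[0, 253168362292447, -29460026745162175, -6079988018530439, -19891749822598776, -5156685055786138,
  1552597613767518, 26752934909539332, -24461436627588988, -5463709147504238, 21378744735105638,
  16090578427870875, -30785329055080837, -19234152061210725, 14862906795316408, 21259295411066950,
  -10660100418392084, -7584709189648317, 2640741694482601, 2217061643747837, -503744609259064],
  [27953155038474706, 11832085887890416, -12345614934213812, 31528914232905514, 43716120444028852,
  -38527265322721306, -32601233500820352, 6041335388486792, 37519949183925656, 4657866465858090,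
  8964330736056180, -7222899146571758, 1708972946917804, -1686464972914784, 220076806440124, 514554195016040,
  69634035451444, 7565707488138, 44370470519016], [-7217415157988721, 26794124037585562, -54744841676083852,
  10662337978657914, -8640180974704396, 34898304885091830, 49453221370910744, -70000615671655516,
  -22789090093493032, 1807484196586328, -4807209254008156, 998993037952230, -997602232502296,
  3901965744889470, 66210190257136, 808723094494658, -173769020704862], [75822149486207958,
  -92898888755953618, -278090066090419032, 40558055551521438, 80120980068262808, 154771651396995206,
  45641674932388412, -107949192534136988, 1025591861615492, -3953885331825308, 4118469923780996,
  5197422143931890, 3778145808265932, 1217693107223192, 147680571905648], [102185940311662967,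
  109585107914700442, 17794890047248828, -16957532299310658, -121300032483547698, -24479557102753402,
  -57552028605260930, 2689032826713034, 1637086957759582, 10378640562243874, 5365703407634840,
  3085362294058788, -307523333244614], [131570759383237626, 270868768117371270, -55343161572144452,
  -584383035437706320, 74415197808259796, 173534995621932586, 5574498978625812, 8063721183809874,
  7756741322987348, 3500075443303016, -1379021309588480], [-373256954777850120, -299484288152620712,
  451071493145072602, -30607198554956066, -175784161830445918, 2740161361885028, 1327332638119250,
  3075994049664400, -2630597514822706], [139863563876812666, 40015076978267010, -110794128714224580,
  299390474781563760, -4586788628228680, 50081203823276, -2249797705597300], [196887880392858042,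
  141232511939681316, -573746752405260868, -5158472020973646, -1400886998974282], [-88051092923995566,
  138481289942261098, -587146570767776], [-30936241820625313]], [[11770202216501900, 26886286499091880,
  -4746219986708864, 9730648871627452, 12852408055104946, -92606005431945872, 404247491016004,
  101664312335916632, -7003365354699258, 2643641815058680, -1826710554431308, -2204833625465640,
  294740906861992, -171391897480458, 1156865793688408, -139946644863928, 129490591154582, -260083427117102],
  [46621605299336780, 549675643543016, -495169473946297564, 340384556958636404, 868954995818735742,
  -848193420597950472, -404336434433659898, 462061467432836828, -3171051269394194, -3893564182324012,
  -4439473707322018, -593359178382748, 2300687240159382, 1176094637877832, -618053908837048,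
  -1266679202518432], [196796045027945400, 93611205604755720, -1121460023976278832, -143743749392454452,
  6052870964300496, 205694016743503456, 450686266024671076, -10712000391613712, -8376162612819176,
  1057575410601812, 6809462022326200, 5839480453246980, 1693285480098872, -2340448396604088],
  [978589085128889131, -1358806366229618180, -1415830315852658324, 1453484105680494256, -194610588396759910,
  140239638301901400, -10383432258619640, -437665456808556, 15665168938759380, 10633277980528128,
  410753667204910, -4940806450314068], [1529779277412013398, 1059886246319457444, -84573435799644096,
  134555345572529120, 352940681723233152, -8394734436431468, 12088821092989280, 11884247665997580,
  935838636290252, -10545690735868820], [-310551694823316219, 1368815636392100068, 51696251363124344,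
  -2189317149334816420, 5102401653500162, 2172639954505240, -1379759811016812, -9649334208561844],
  [-2204241585580556522, -1032456359520961804, 2967719733347809324, -13691027220069828, -4459300012307840,
  -4228549092165540], [507227834196418185, -1147032104393889836, -9319376858997806, 2444569168176292],
  [893164604840331518, 7088042591186564]], [[-46850485101033732, -136225156619913495, 155279335446923530,
  205188398237626637, 759496156510883823, -201296536866621932, -736296589242872791, 3799018144802780,
  2787582568755854, -4387675349290540, -5736464732640368, 3106149009919950, 775503020983589, -9551191614837,
  -1470442143641635], [11965523786593404, 1461736372712266744, -2006843886430696332, 76988851423081774,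
  2437786274033663152, -1981133991132571884, 9162377633881216, -12475794547422922, -1505529465087712,
  9796551145494648, 3149026045062044, 3775464663843742, -1929733481007364], [-712931070742916168,
  -859929291775378182, -2580514560493594010, -528162041127603046, -847050186061460398, -21812033690215362,
  -15740711781633242, 17289890783290186, -291018898901140, -2898679484483908, -1027382312658174],
  [1687577015810034336, -5407397621561417398, 134353291059307860, 4813260547991103308, 963631488904920,
  -1263647436709494, -14548263155124784, -6512517837456186, -13781453220765084], [5454604108189077246,
  2412329596974928348, -4791674558920380032, -12173368566299756, -37742512718708074, -13251306099060474,
  -10567879340085204], [-983179497819328910, 4494804968222514880, -29452725569351652, -13604275429871148,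
  -8361108915322832], [-4133470375971280854, -16316914446291506, -5842810537391782], [-5080724256029996]],
  [[-259066791527775376, -589313176410761332, 1828899988105273264, 656930743627400044, 2047077653330687826,
  288408692481804, -3699330795632940, 24821599003882228, 14450182762682696, 5721385813687322,
  8361226271743586, 5832835020155978], [-2800156839895980333, 7290201960485174068, 1507636725891501550,
  -3480840791008480432, -30601593240692312, 51710882050163128, 54860200188607768, 29314661129682736,
  -1413356755433536, 26971449353567848], [-8238655199108780906, -2207179918471000008, 1967891353777140248,
  66091268949696136, 11033700136739940, 4959088566607896, -2345301312137804, 2906865110153940],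
  [1047659487508003104, -9572223903465500368, -35740341334027790, -13370220698591096, -21234059445219072,
  3405371626652832], [8336420850495144386, -11300291230875836, -21036562080796836, -1541336364401484],
  [-11991553971660089, -17781446649639052]], [[2239305911769130605, 426166017651876229, 558517770578871901,
  -30697165492621461, -4800750134864005, 42275660378575801, 23100016068605380, -14655050639799637,
  29375667756616138], [-7520951626448450032, 11119147044438040368, -10674314560630512, 45660021338858122,
  3046873240843032, -23619835771705490, 20033141755946540], [-9186722608115612549, 20746528268758750,
  -25795591925423194, -30963296338616356, 27772332946258876], [-9076218049526922, -8778941337297414,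
  18029822759835332], [6792772275686739]], [[5608837560095374716, -20726409897134560, 46617129633239146,
  -37134760011855656, -19671899485477910, -10316936794526856], [80207570605372710, -45359846592753300,
  -66120577175827914, 13103521471572696], [-10717137428707796, 30525842898036772]], [[3930378179030851,
  -7324039913501650, 25424120280476965], [17011769690772278]]]

def dataC : ℤ := 928449874447744061407

open PE in
def resE : PE := poly3 dataR (mul (mul u v) t) (mul u v) u

open PE in
def mainE : PE :=
  add (mul (c 6006) (kE u v t dataK)) (add (mul (c 78) (add (kE u u (c 1) dataK)
    (add (kE (c 1) u u dataK) (kE u (c 1) u dataK)))) (add (kE (c 1) (c 1) (c 1) dataK)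
    (add (sosE dataS) (add (c dataC) resE))))

namespace PE
open MvPolynomial

theorem evZ_eq (a b d : ℤ) (e : PE) : evZ a b d e = ev a b d e := by
  induction e with
  | add p q hp hq => simp only [evZ, ev, hp, hq]; rfl
  | mul p q hp hq => simp only [evZ, ev, hp, hq]; rfl
  | _ => simp [evZ, ev]

theorem ev_hom {A B : Type*} [CommRing A] [CommRing B] (f : A →+* B) (a b d : A) (e : PE) :
    f (ev a b d e) = ev (f a) (f b) (f d) e := by
  induction e with
  | add p q hp hq => simp only [ev, map_add, hp, hq]
  | mul p q hp hq => simp only [ev, map_mul, hp, hq]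
  | _ => simp [ev]

/-- majorant polynomial -/
noncomputable def evM (a b d : MvPolynomial (Fin 3) ℕ) : PE → MvPolynomial (Fin 3) ℕ
  | c z => C z.natAbs
  | u => a
  | v => b
  | t => d
  | add p q => evM a b d p + evM a b d q
  | mul p q => evM a b d p * evM a b d q

theorem evM_one (i j k : Fin 3) (e : PE) :
    eval (fun _ => 1) (evM (X i) (X j) (X k) e) = nrm e := by
  induction e with
  | add p q hp hq => simp only [evM, nrm, map_add, hp, hq]; rfl
  | mul p q hp hq => simp only [evM, nrm, map_mul, hp, hq]; rfl
  | _ => simp [evM, nrm]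

theorem coeff_le_one (q : MvPolynomial (Fin 3) ℕ) (m : Fin 3 →₀ ℕ) :
    coeff m q ≤ eval (fun _ => 1) q := by
  rw [eval_eq]
  by_cases h : m ∈ q.support
  · simpa using Finset.single_le_sum (f := fun d => coeff d q) (fun i _ => Nat.zero_le _) h
  · rw [notMem_support_iff.mp h]; exact Nat.zero_le _

theorem coeff_ev (i j k : Fin 3) (e : PE) : ∀ m : Fin 3 →₀ ℕ,
    (coeff m (ev (X i) (X j) (X k) e : MvPolynomial (Fin 3) ℤ)).natAbs ≤
      coeff m (evM (X i) (X j) (X k) e) := by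
  have hX : ∀ (i : Fin 3) (m : Fin 3 →₀ ℕ), (coeff m (X i : MvPolynomial (Fin 3) ℤ)).natAbs ≤
      coeff m (X i : MvPolynomial (Fin 3) ℕ) := by
    intro i m
    simp only [coeff_X']
    split_ifs <;> simp
  induction e with
  | c z =>
    intro m
    have : ((z : MvPolynomial (Fin 3) ℤ)) = C z := by simp
    simp only [ev, evM, this, coeff_C]
    split_ifs <;> simp
  | u => exact hX i
  | v => exact hX j
  | t => exact hX k
  | add p q hp hq =>
    intro m
    simp only [ev, evM, coeff_add]
    exact (Int.natAbs_add_le _ _).trans (Nat.add_le_add (hp m) (hq m))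
  | mul p q hp hq =>
    intro m
    simp only [ev, evM, coeff_mul]
    have h : ∀ (s : Finset ((Fin 3 →₀ ℕ) × (Fin 3 →₀ ℕ))) (f : (Fin 3 →₀ ℕ) × (Fin 3 →₀ ℕ) → ℤ),
        (∑ x ∈ s, f x).natAbs ≤ ∑ x ∈ s, (f x).natAbs := by
      intro s f
      zify
      exact Finset.abs_sum_le_sum_abs _ _
    refine (h _ _).trans (Finset.sum_le_sum fun x _ => ?_)
    rw [Int.natAbs_mul]
    exact Nat.mul_le_mul (hp _) (hq _)

theorem deg_ev (i j k : Fin 3) (e : PE) :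
    (ev (X i) (X j) (X k) e : MvPolynomial (Fin 3) ℤ).totalDegree ≤ deg e := by
  induction e with
  | c z =>
    have : ((z : MvPolynomial (Fin 3) ℤ)) = C z := by simp
    rw [ev, this, totalDegree_C]
    exact Nat.zero_le _
  | add p q hp hq =>
    rw [ev, deg]
    refine (totalDegree_add _ _).trans (max_le ?_ ?_)
    · cases h : Nat.ble (deg p) (deg q)
      · simpa using hp
      · simpa using hp.trans (Nat.le_of_ble_eq_true h)
    · cases h : Nat.ble (deg p) (deg q)
      · have : ¬ deg p ≤ deg q := fun h' => by rw [Nat.ble_eq_true_of_le h'] at h; cases h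
        simp only [cond_false]; omega
      · simpa using hq
  | mul p q hp hq =>
    exact (totalDegree_mul _ _).trans (Nat.add_le_add hp hq)
  | _ => simp [ev, deg, totalDegree_X]

theorem digits_zero {ι : Type*} (s : Finset ι) (f : ι → ℤ) (e : ι → ℕ) (B : ℤ)
    (he : Set.InjOn e s) (hf : ∀ i ∈ s, |f i| < B) (h0 : ∑ i ∈ s, f i * B ^ e i = 0) :
    ∀ i ∈ s, f i = 0 := by
  classical
  by_contra! hcon
  obtain ⟨i0, hi0, hne0⟩ := hcon
  obtain ⟨i, hi, hmin⟩ := Finset.exists_min_image (s.filter fun i => f i ≠ 0) e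
    ⟨i0, Finset.mem_filter.mpr ⟨hi0, hne0⟩⟩
  rw [Finset.mem_filter] at hi
  have hB : 0 < B := lt_of_le_of_lt (abs_nonneg _) (hf i hi.1)
  have hdvd : B ^ (e i + 1) ∣ f i * B ^ e i := by
    have : f i * B ^ e i = - ∑ j ∈ s.erase i, f j * B ^ e j := by
      rw [← Finset.add_sum_erase s _ hi.1] at h0
      linarith
    rw [this, dvd_neg]
    refine Finset.dvd_sum fun j hj => ?_
    rw [Finset.mem_erase] at hj
    by_cases hz : f j = 0
    · simp [hz]
    · have h1 := hmin j (Finset.mem_filter.mpr ⟨hj.2, hz⟩)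
      have h2 : e i ≠ e j := fun h => hj.1 (he hj.2 hi.1 h.symm)
      exact Dvd.dvd.mul_left (pow_dvd_pow _ (by omega)) _
  rw [pow_succ', mul_dvd_mul_iff_right (by positivity)] at hdvd
  exact hi.2 (Int.eq_zero_of_abs_lt_dvd hdvd (hf i hi.1))

theorem kron_zero (P : MvPolynomial (Fin 3) ℤ) (B : ℤ) (hd : P.totalDegree ≤ 20)
    (hc : ∀ m, |coeff m P| < B) (h0 : eval ![B, B ^ 21, B ^ 441] P = 0) : P = 0 := by
  rw [eval_eq'] at h0
  have h1 : ∀ m ∈ P.support, coeff m P = 0 := by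
    refine digits_zero P.support (fun m => coeff m P) (fun m => m 0 + 21 * m 1 + 441 * m 2) B ?_
      (fun m _ => hc m) ?_
    · intro m hm m' hm' h
      have hb : ∀ m ∈ P.support, ∀ i, m i ≤ 20 := by
        intro m hm i
        refine le_trans ?_ hd
        exact (le_degreeOf_of_mem_support i hm).trans (degreeOf_le_totalDegree _ _)
      have a0 := hb m hm 0
      have a1 := hb m hm 1
      have a2 := hb m hm 2
      have b0 := hb m' hm' 0
      have b1 := hb m' hm' 1
      have b2 := hb m' hm' 2
      simp only at h
      ext i
      fin_cases i <;> simp <;> omega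
    · rw [← h0]
      refine Finset.sum_congr rfl fun m _ => ?_
      simp only [Fin.prod_univ_three]
      simp
      left
      ring
  ext m
  by_cases hm : m ∈ P.support
  · simpa using h1 m hm
  · simpa using notMem_support_iff.mp hm

def sym6 {A : Type*} [CommRing A] (a b d : A) (e : PE) : A :=
  ev a b d e + (ev a d b e + (ev b a d e + (ev b d a e + (ev d a b e + ev d b a e))))

def sym6Z (a b d : ℤ) (e : PE) : ℤ :=
  Int.add (evZ a b d e) (Int.add (evZ a d b e) (Int.add (evZ b a d e)
    (Int.add (evZ b d a e) (Int.add (evZ d a b e) (evZ d b a e)))))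

theorem sym6_hom {A B : Type*} [CommRing A] [CommRing B] (f : A →+* B) (a b d : A) (e : PE) :
    f (sym6 a b d e) = sym6 (f a) (f b) (f d) e := by
  simp only [sym6, map_add, ev_hom]

theorem sym6_zero (e : PE) (B : ℕ) (hd : deg e ≤ 20) (hn : 6 * nrm e < B)
    (h0 : sym6Z (Int.ofNat B) (Int.ofNat (B ^ 21)) (Int.ofNat (B ^ 441)) e = 0) (a b d : ℝ) :
    sym6 a b d e = 0 := by
  set P : MvPolynomial (Fin 3) ℤ := sym6 (X 0) (X 1) (X 2) e with hP
  have hP0 : P = 0 := by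
    apply kron_zero P B
    · have := fun i j k => (deg_ev i j k e).trans hd
      simp only [hP, sym6]
      refine (totalDegree_add _ _).trans (max_le (this _ _ _) ?_)
      refine (totalDegree_add _ _).trans (max_le (this _ _ _) ?_)
      refine (totalDegree_add _ _).trans (max_le (this _ _ _) ?_)
      refine (totalDegree_add _ _).trans (max_le (this _ _ _) ?_)
      exact (totalDegree_add _ _).trans (max_le (this _ _ _) (this _ _ _))
    · intro m
      have hb : ∀ i j k : Fin 3, (coeff m (ev (X i) (X j) (X k) e : MvPolynomial (Fin 3) ℤ)).natAbs ≤ nrm e := by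
        intro i j k
        rw [← evM_one i j k e]
        exact (coeff_ev i j k e m).trans (coeff_le_one _ _)
      have h1 := hb 0 1 2
      have h2 := hb 0 2 1
      have h3 := hb 1 0 2
      have h4 := hb 1 2 0
      have h5 := hb 2 0 1
      have h6 := hb 2 1 0
      simp only [hP, sym6, coeff_add]
      rw [abs_lt]
      constructor <;> omega
    · rw [sym6_hom]
      simp only [eval_X]
      have : sym6Z (Int.ofNat B) (Int.ofNat (B ^ 21)) (Int.ofNat (B ^ 441)) e =
        sym6 (B : ℤ) ((B : ℤ) ^ 21) ((B : ℤ) ^ 441) e := by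
        have e1 : (Int.ofNat (B ^ 21)) = (B : ℤ) ^ 21 := by
          rw [Int.ofNat_eq_natCast]; push_cast; rfl
        have e2 : (Int.ofNat (B ^ 441)) = (B : ℤ) ^ 441 := by
          rw [Int.ofNat_eq_natCast]; push_cast; rfl
        rw [e1, e2]
        unfold sym6Z sym6
        simp only [evZ_eq]
        rfl
      rw [← h0, this]
      rfl
  have h := sym6_hom (eval₂Hom (Int.castRingHom ℝ) ![a, b, d]) (X 0) (X 1) (X 2) e
  rw [← hP, hP0] at h
  simp at h
  exact h.symm

/-! evaluation lemmas -/

theorem abs_ev_le (a b d : ℝ) (ha : |a| ≤ 1) (hb : |b| ≤ 1) (hd : |d| ≤ 1) (e : PE) :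
    |ev a b d e| ≤ nrm e := by
  induction e with
  | c z => simp [ev, nrm, ← Int.cast_abs, Nat.cast_natAbs]
  | u => simpa [ev, nrm] using ha
  | v => simpa [ev, nrm] using hb
  | t => simpa [ev, nrm] using hd
  | add p q hp hq =>
    have : ((nrm (add p q) : ℕ) : ℝ) = nrm p + nrm q := by
      rw [← Nat.cast_add]; rfl
    rw [this, ev]
    exact (abs_add_le _ _).trans (add_le_add hp hq)
  | mul p q hp hq =>
    have : ((nrm (mul p q) : ℕ) : ℝ) = nrm p * nrm q := by
      rw [← Nat.cast_mul]; rfl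
    rw [this, ev, abs_mul]
    exact mul_le_mul hp hq (abs_nonneg _) (Nat.cast_nonneg _)

section
variable {A : Type*} [CommRing A] (a b d : A)

theorem ev_sub (p q : PE) : ev a b d (sub p q) = ev a b d p - ev a b d q := by
  simp [sub, ev]; ring

def horA (x : ℝ) : List ℤ → ℝ
  | [] => 0
  | z :: l => z + x * horA x l

theorem ev_hor (a b d : ℝ) (x : PE) (l : List ℤ) : ev a b d (hor x l) = horA (ev a b d x) l := by
  induction l with
  | nil => simp [hor, ev, horA]
  | cons z l ih =>
    cases l with
    | nil => simp [hor, ev, horA]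
    | cons z' l =>
      simp only [hor, ev, ih]
      simp only [horA]

theorem ev_pw (x : PE) (n : ℕ) : ev a b d (pw x n) = ev a b d x ^ n := by
  induction n with
  | zero => simp [pw, ev]
  | succ n ih => rw [pw, ev, ih, pow_succ']
end

def hA (r s : ℝ) : ℕ → List ℤ → ℝ
  | _, [] => 0
  | k, z :: l => z * r ^ k + s * hA r s (k - 2) l

theorem ev_hE (a b d : ℝ) (r s : PE) (l : List ℤ) : ∀ k,
    ev a b d (hE r s k l) = hA (ev a b d r) (ev a b d s) k l := by
  induction l with
  | nil => intro k; simp [hE, ev, hA]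
  | cons z l ih =>
    intro k
    cases l with
    | nil => simp [hE, ev, hA, ev_pw]
    | cons z' l =>
      rw [hE, ev, ev, ev, ev_pw, ev, ih]
      simp only [hA]

theorem hA_eq (r s : ℝ) (l : List ℤ) : ∀ k, hA r s k l =
    ∑ j ∈ Finset.range l.length, ((l.getD j 0 : ℤ) : ℝ) * (r ^ (k - 2 * j) * s ^ j) := by
  induction l with
  | nil => intro k; simp [hA]
  | cons z l ih =>
    intro k
    rw [hA, ih, List.length_cons, Finset.sum_range_succ', Finset.mul_sum, add_comm]
    congr 1
    · refine Finset.sum_congr rfl fun j _ => ?_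
      rw [show k - 2 - 2 * j = k - 2 * (j + 1) by omega, List.getD_cons_succ]
      ring
    · simp

theorem ev_sqs (a b d : ℝ) (x y : PE) (l : List (List ℤ)) : ev a b d (sqs x y l) =
    (l.map fun w => horA (ev a b d x) w * horA (ev a b d y) w).sum := by
  induction l with
  | nil => simp [sqs, ev]
  | cons w l ih => simp [sqs, ev, ih, ev_hor]

def kA (D : List (ℕ × List ℤ × List (List ℤ))) (x y z : ℝ) : ℝ :=
  (D.map fun q => hA (z - x * y) ((1 - x * x) * (1 - y * y)) q.1 q.2.1 *
    (q.2.2.map fun w => horA x w * horA y w).sum).sum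

theorem ev_kE (a b d : ℝ) (x y z : PE) (D : List (ℕ × List ℤ × List (List ℤ))) :
    ev a b d (kE x y z D) = kA D (ev a b d x) (ev a b d y) (ev a b d z) := by
  induction D with
  | nil => simp [kE, kA, ev]
  | cons q D ih =>
    rw [kE, ev, ih, ev, ev_hE, ev_sqs]
    simp [kA, ev, ev_sub]

theorem sos_nonneg (a b d : ℝ) (h1 : -1 ≤ a) (h2 : a ≤ 1 / 2)
    (L : List (Bool × Bool × List (List (List ℤ)))) : 0 ≤ ev a b d (sosE L) := by
  induction L with
  | nil => simp [sosE, ev]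
  | cons q L ih =>
    rw [sosE, ev, ev, ev, ev]
    refine add_nonneg (mul_nonneg ?_ (mul_nonneg ?_ (mul_self_nonneg _))) ih
    · cases q.2.1
      · simp [ev]
      · simp only [cond_true, ev, ev_sub]
        push_cast
        exact mul_nonneg (by linarith) (by linarith)
    · cases q.1
      · simp [ev]
      · simp only [cond_true, ev, ev_sub]
        exact mul_self_nonneg _

end PE

theorem main_deg : Nat.ble (PE.deg mainE) 20 = true := by decide +kernel

theorem main_nrm : Nat.ble (6 * PE.nrm mainE + 1) (2 ^ 120) = true := by decide +kernel

theorem res_nrm : Nat.ble (PE.nrm resE + 1) (Int.toNat dataC) = true := by decide +kernel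

set_option exponentiation.threshold 100000 in
theorem main_zero : PE.sym6Z (Int.ofNat (2 ^ 120)) (Int.ofNat ((2 ^ 120) ^ 21))
    (Int.ofNat ((2 ^ 120) ^ 441)) mainE = 0 := by decide +kernel

theorem main_sym (a b d : ℝ) : PE.sym6 a b d mainE = 0 :=
  PE.sym6_zero mainE (2 ^ 120) (Nat.le_of_ble_eq_true main_deg) (Nat.le_of_ble_eq_true main_nrm)
    main_zero a b d

theorem res_lt : ((PE.nrm resE : ℕ) : ℝ) < ((dataC : ℤ) : ℝ) := by
  have h := Nat.le_of_ble_eq_true res_nrm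
  have h2 : ((PE.nrm resE : ℕ) : ℤ) < dataC := by omega
  exact_mod_cast h2

end Kron
section Fischer
open MvPolynomial

noncomputable def wt (m : Fin 5 →₀ ℕ) : ℝ := ∏ i, ((m i).factorial : ℝ)

noncomputable def fis (q : MvPolynomial (Fin 5) ℝ) : MvPolynomial (Fin 5) ℝ →ₗ[ℝ] ℝ :=
  (basisMonomials (Fin 5) ℝ).constr ℝ (fun m => wt m * coeff m q)

theorem fis_monomial (q : MvPolynomial (Fin 5) ℝ) (m : Fin 5 →₀ ℕ) (a : ℝ) :
    fis q (monomial m a) = a * (wt m * coeff m q) := by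
  have h : (monomial m a : MvPolynomial (Fin 5) ℝ) = a • (basisMonomials (Fin 5) ℝ m) := by
    simp [coe_basisMonomials, smul_monomial]
  rw [h, map_smul, fis, Module.Basis.constr_basis, smul_eq_mul]

theorem fis_add_left (q r p : MvPolynomial (Fin 5) ℝ) : fis (q + r) p = fis q p + fis r p := by
  induction p using MvPolynomial.induction_on' with
  | monomial m a => simp only [fis_monomial, coeff_add]; ring
  | add p p' h h' => simp only [map_add, h, h']; ring

theorem fis_zero_left (p : MvPolynomial (Fin 5) ℝ) : fis 0 p = 0 := by
  have := fis_add_left 0 0 p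
  simp only [add_zero] at this
  linarith

theorem fis_symm (q p : MvPolynomial (Fin 5) ℝ) : fis q p = fis p q := by
  induction p using MvPolynomial.induction_on' with
  | monomial m a =>
    induction q using MvPolynomial.induction_on' with
    | monomial m' a' =>
      simp only [fis_monomial, coeff_monomial]
      by_cases h : m = m'
      · subst h; simp; ring
      · simp [h, Ne.symm h]
    | add p p' h h' => simp only [map_add, fis_add_left, h, h']
  | add p p' h h' => simp only [map_add, fis_add_left, h, h']

theorem fis_self_nonneg (p : MvPolynomial (Fin 5) ℝ) : 0 ≤ fis p p := by
  have : fis p p = ∑ m ∈ p.support, wt m * (coeff m p) ^ 2 := by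
    conv_lhs => arg 2; rw [p.as_sum]
    rw [map_sum]
    refine Finset.sum_congr rfl fun m _ => ?_
    rw [fis_monomial]; ring
  rw [this]
  refine Finset.sum_nonneg fun m _ => mul_nonneg (Finset.prod_nonneg fun i _ => by positivity) (sq_nonneg _)

theorem wt_add (m : Fin 5 →₀ ℕ) (i : Fin 5) :
    wt (m + Finsupp.single i 1) = wt m * (m i + 1) := by
  unfold wt
  rw [Fintype.prod_eq_mul_prod_compl i, Fintype.prod_eq_mul_prod_compl i (fun j => ((m j).factorial : ℝ))]
  have : ∀ j ∈ ({i} : Finset (Fin 5))ᶜ, (((m + Finsupp.single i 1 : Fin 5 →₀ ℕ) j).factorial : ℝ) = ((m j).factorial : ℝ) := by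
    intro j hj
    have : i ≠ j := by
      intro h; subst h; simp at hj
    simp [Finsupp.single_apply, this]
  rw [Finset.prod_congr rfl this]
  simp [Nat.factorial_succ]
  ring

theorem fis_X_mul (i : Fin 5) (p q : MvPolynomial (Fin 5) ℝ) :
    fis q (X i * p) = fis (pderiv i q) p := by
  induction p using MvPolynomial.induction_on' with
  | monomial m a =>
    have : (X i * monomial m a : MvPolynomial (Fin 5) ℝ) = monomial (m + Finsupp.single i 1) a := by
      rw [X, monomial_mul, one_mul, add_comm]
    rw [this, fis_monomial, fis_monomial, coeff_pderiv, wt_add]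
    ring
  | add p p' h h' => simp only [mul_add, map_add, h, h']

noncomputable def lf (x : Fin 5 → ℝ) : MvPolynomial (Fin 5) ℝ := ∑ i, C (x i) * X i
noncomputable def rho : MvPolynomial (Fin 5) ℝ := ∑ i, X i * X i
noncomputable def lap (p : MvPolynomial (Fin 5) ℝ) : MvPolynomial (Fin 5) ℝ :=
  ∑ i, pderiv i (pderiv i p)
def nsq (x : Fin 5 → ℝ) : ℝ := ∑ i, x i * x i

theorem fis_rho_mul (p q : MvPolynomial (Fin 5) ℝ) : fis q (rho * p) = fis (lap q) p := by
  have h : ∀ (s : Finset (Fin 5)), fis (∑ i ∈ s, pderiv i (pderiv i q)) p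
      = ∑ i ∈ s, fis (pderiv i (pderiv i q)) p := by
    intro s
    induction s using Finset.induction_on with
    | empty => simp [fis_zero_left]
    | insert a s ha ih => rw [Finset.sum_insert ha, Finset.sum_insert ha, fis_add_left, ih]
  rw [lap, h, rho, Finset.sum_mul, map_sum]
  refine Finset.sum_congr rfl fun i _ => ?_
  rw [mul_assoc, fis_X_mul, fis_X_mul]

theorem fis_lf_pow (x : Fin 5 → ℝ) (k : ℕ) : ∀ (q : MvPolynomial (Fin 5) ℝ), q.IsHomogeneous k →
    fis q (lf x ^ k) = k.factorial * eval x q := by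
  induction k with
  | zero =>
    intro q hq
    have h0 : q = C (coeff 0 q) := by
      apply totalDegree_eq_zero_iff_eq_C.mp
      have := hq.totalDegree_le
      omega
    rw [h0]
    have : (lf x ^ 0 : MvPolynomial (Fin 5) ℝ) = monomial 0 1 := by simp
    rw [this, fis_monomial]
    simp [wt]
  | succ k ih =>
    intro q hq
    have he := hq.sum_X_mul_pderiv
    have he2 := congrArg (eval x) he
    simp only [map_sum, map_mul, eval_X, map_nsmul, nsmul_eq_mul] at he2
    rw [pow_succ', lf, Finset.sum_mul, map_sum, ← lf]
    have : ∀ i ∈ (Finset.univ : Finset (Fin 5)), fis q (C (x i) * X i * lf x ^ k)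
        = x i * (k.factorial * eval x (pderiv i q)) := by
      intro i _
      rw [mul_assoc, ← smul_eq_C_mul, map_smul, fis_X_mul, smul_eq_mul, ih _ (by simpa using hq.pderiv (i := i))]
    rw [Finset.sum_congr rfl this, Nat.factorial_succ]
    push_cast at he2 ⊢
    calc _ = (k.factorial : ℝ) * ∑ i, x i * eval x (pderiv i q) := by
            rw [Finset.mul_sum]; exact Finset.sum_congr rfl fun i _ => by ring
      _ = _ := by rw [he2]; simp; ring

theorem pderiv_lf (x : Fin 5 → ℝ) (i : Fin 5) : pderiv i (lf x) = C (x i) := by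
  rw [lf, map_sum]
  simp [pderiv_C_mul, pderiv_X, Pi.single_apply]

theorem pderiv_rho (i : Fin 5) : pderiv i rho = 2 * X i := by
  rw [rho, map_sum]
  simp [pderiv_mul, pderiv_X, Pi.single_apply, Finset.sum_add_distrib]
  ring

theorem lap_term (x : Fin 5 → ℝ) (a b : ℕ) :
    lap (lf x ^ a * rho ^ b) = C ((a : ℝ) * ((a : ℝ) - 1) * nsq x) * lf x ^ (a - 2) * rho ^ b
      + C (2 * (b : ℝ) * (3 + 2 * a + 2 * b)) * lf x ^ a * rho ^ (b - 1) := by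
  have e2 : ∀ n : ℕ, n + 1 + 1 - 2 = n := fun n => by omega
  have hx : ∑ i, C (x i) * X i = lf x := rfl
  have hr : ∑ i, X i * X i = rho := rfl
  have hn : ∑ i, C (x i) * C (x i) = (C (nsq x) : MvPolynomial (Fin 5) ℝ) := by
    simp [nsq]
  have key : ∀ i, pderiv i (pderiv i (lf x ^ a * rho ^ b)) =
      (C (a : ℝ) * C ((a : ℝ) - 1)  * lf x ^ (a - 2) * rho ^ b) * (C (x i) * C (x i))
      + (C (4 * (a : ℝ) * (b : ℝ)) * lf x ^ (a-1) * rho ^ (b - 1)) * (C (x i) * X i)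
      + (C (4 * (b : ℝ) * ((b : ℝ) - 1)) * lf x ^ a * rho ^ (b - 2)) * (X i * X i)
      + (C (2 * (b : ℝ)) * lf x ^ a * rho ^ (b - 1)) := by
    intro i
    have h1 : pderiv i (lf x ^ a * rho ^ b) =
        C (a : ℝ) * C (x i) * lf x ^ (a - 1) * rho ^ b
        + C (2 * (b : ℝ)) * X i * lf x ^ a * rho ^ (b - 1) := by
      rw [pderiv_mul, pderiv_pow, pderiv_pow, pderiv_lf, pderiv_rho]
      simp only [map_natCast, map_mul, map_ofNat]
      ring
    rw [h1]
    simp only [map_add, pderiv_mul, pderiv_pow, pderiv_lf, pderiv_rho, pderiv_C, pderiv_X_self]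
    rcases a with _ | _ | a <;> rcases b with _ | _ | b <;>
    simp only [map_natCast, map_mul, map_ofNat, map_sub, map_add, map_one, map_zero, Nat.cast_zero,
      Nat.cast_add, Nat.cast_one, e2, Nat.add_sub_cancel, Nat.zero_sub, pow_zero] <;> ring
  unfold lap
  rw [Finset.sum_congr rfl fun i _ => key i]
  rw [Finset.sum_add_distrib, Finset.sum_add_distrib, Finset.sum_add_distrib, ← Finset.mul_sum,
    ← Finset.mul_sum, ← Finset.mul_sum, hx, hr, hn, Finset.sum_const, Finset.card_univ,
    Fintype.card_fin, nsmul_eq_mul]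
  rcases a with _ | _ | a <;> rcases b with _ | _ | b <;>
    simp only [map_natCast, map_mul, map_ofNat, map_sub, map_add, map_one, map_zero, Nat.cast_zero,
      Nat.cast_add, Nat.cast_one, e2, Nat.add_sub_cancel, Nat.zero_sub, pow_zero, Nat.cast_ofNat] <;> ring

/-- zonal polynomial -/
noncomputable def zon (k : ℕ) (c : ℕ → ℝ) (x : Fin 5 → ℝ) : MvPolynomial (Fin 5) ℝ :=
  ∑ j ∈ Finset.range (k / 2 + 1), C (c j * nsq x ^ j) * (lf x ^ (k - 2 * j) * rho ^ j)

theorem lap_zon (k : ℕ) (c : ℕ → ℝ)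
    (hc : ∀ j < k / 2, c (j + 1) * (2 * (j + 1) * (2 * k - 2 * j + 1)) =
      - (c j * ((k - 2 * j) * (k - 2 * j - 1)))) (x : Fin 5 → ℝ) : lap (zon k c x) = 0 := by
  have hl : lap (zon k c x) = ∑ j ∈ Finset.range (k / 2 + 1),
      C (c j * nsq x ^ j) * lap (lf x ^ (k - 2 * j) * rho ^ j) := by
    unfold lap zon
    simp only [map_sum, pderiv_C_mul, Finset.mul_sum]
    rw [Finset.sum_comm]
  set A : ℕ → MvPolynomial (Fin 5) ℝ := fun j =>
    C (c j * nsq x ^ (j + 1) * ((k - 2 * j) * (k - 2 * j - 1))) * lf x ^ (k - 2 * j - 2) * rho ^ j with hA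
  set B : ℕ → MvPolynomial (Fin 5) ℝ := fun j =>
    C (c j * nsq x ^ j * (2 * j * (2 * k - 2 * j + 3))) * lf x ^ (k - 2 * j) * rho ^ (j - 1) with hB
  have h2 : ∀ j ∈ Finset.range (k / 2 + 1),
      C (c j * nsq x ^ j) * lap (lf x ^ (k - 2 * j) * rho ^ j) = A j + B j := by
    intro j hj
    rw [Finset.mem_range] at hj
    rw [lap_term, Nat.cast_sub (by omega), hA, hB]
    simp only [map_mul, map_sub, map_add, map_pow, Nat.cast_mul, Nat.cast_ofNat]
    simp only [map_natCast, map_ofNat, map_one]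
    ring
  rw [hl, Finset.sum_congr rfl h2, Finset.sum_add_distrib, Finset.sum_range_succ,
    Finset.sum_range_succ' B]
  have hB0 : B 0 = 0 := by simp [hB]
  have hAK : A (k / 2) = 0 := by
    have : ((k : ℝ) - 2 * (k / 2 : ℕ)) * ((k : ℝ) - 2 * (k / 2 : ℕ) - 1) = 0 := by
      rcases Nat.mod_two_eq_zero_or_one k with h | h
      · have : (k : ℝ) = 2 * (k / 2 : ℕ) := by exact_mod_cast (by omega : k = 2 * (k / 2))
        rw [sub_eq_zero.mpr this, zero_mul]
      · have : (k : ℝ) = 2 * (k / 2 : ℕ) + 1 := by exact_mod_cast (by omega : k = 2 * (k / 2) + 1)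
        have h3 : (k : ℝ) - 2 * (k / 2 : ℕ) - 1 = 0 := by linarith
        rw [h3, mul_zero]
    simp only [hA]
    rw [this]; simp
  have hAB : ∀ j ∈ Finset.range (k / 2), B (j + 1) = - A j := by
    intro j hj
    rw [Finset.mem_range] at hj
    have := hc j hj
    simp only [hA, hB]
    rw [show c (j + 1) * nsq x ^ (j + 1) * (2 * ((j + 1 : ℕ) : ℝ) * (2 * k - 2 * ((j + 1 : ℕ) : ℝ) + 3))
      = - (c j * nsq x ^ (j + 1) * ((k - 2 * j) * (k - 2 * j - 1))) by
        push_cast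
        linear_combination (nsq x ^ (j + 1)) * this]
    rw [show k - 2 * (j + 1) = k - 2 * j - 2 by omega, Nat.add_sub_cancel, map_neg]
    ring
  rw [hB0, hAK, Finset.sum_congr rfl hAB, Finset.sum_neg_distrib]
  ring

theorem zon_hom (k : ℕ) (c : ℕ → ℝ) (x : Fin 5 → ℝ) : (zon k c x).IsHomogeneous k := by
  unfold zon
  apply IsHomogeneous.sum
  intro j hj
  rw [Finset.mem_range] at hj
  have hlf : (lf x).IsHomogeneous 1 := by
    unfold lf
    apply IsHomogeneous.sum
    intro i _
    simpa using (isHomogeneous_C (Fin 5) (x i)).mul (isHomogeneous_X ℝ i)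
  have hrho : rho.IsHomogeneous 2 := by
    unfold rho
    apply IsHomogeneous.sum
    intro i _
    exact (isHomogeneous_X ℝ i).mul (isHomogeneous_X ℝ i)
  have := (isHomogeneous_C (Fin 5) (c j * nsq x ^ j)).mul ((hlf.pow (k - 2 * j)).mul (hrho.pow j))
  convert this using 1
  omega

def dt (x y : Fin 5 → ℝ) : ℝ := ∑ i, x i * y i

def hk (k : ℕ) (c : ℕ → ℝ) (r s : ℝ) : ℝ :=
  ∑ j ∈ Finset.range (k / 2 + 1), c j * (r ^ (k - 2 * j) * s ^ j)

theorem fis_zon (k : ℕ) (c : ℕ → ℝ)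
    (hc : ∀ j < k / 2, c (j + 1) * (2 * (j + 1) * (2 * k - 2 * j + 1)) =
      - (c j * ((k - 2 * j) * (k - 2 * j - 1)))) (x y : Fin 5 → ℝ) :
    fis (zon k c y) (zon k c x) = c 0 * k.factorial * hk k c (dt x y) (nsq x * nsq y) := by
  conv_lhs => arg 2; unfold zon
  rw [Finset.sum_range_succ', map_add, map_sum]
  have h0 : ∀ j ∈ Finset.range (k / 2), fis (zon k c y)
      (C (c (j + 1) * nsq x ^ (j + 1)) * (lf x ^ (k - 2 * (j + 1)) * rho ^ (j + 1))) = 0 := by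
    intro j _
    rw [← smul_eq_C_mul, map_smul, pow_succ' rho, mul_left_comm (lf x ^ _), fis_rho_mul, lap_zon k c hc, fis_zero_left,
      smul_zero]
  rw [Finset.sum_eq_zero h0, ← smul_eq_C_mul, map_smul]
  simp only [mul_zero, Nat.sub_zero, pow_zero, mul_one, zero_add, smul_eq_mul]
  rw [fis_lf_pow x k _ (zon_hom k c y)]
  have : eval x (zon k c y) = hk k c (dt x y) (nsq x * nsq y) := by
    unfold zon hk
    rw [map_sum]
    refine Finset.sum_congr rfl fun j _ => ?_
    have h1 : eval x (lf y) = dt x y := by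
      simp [lf, dt, mul_comm]
    have h2 : eval x rho = nsq x := by simp [rho, nsq]
    simp only [map_mul, map_pow, eval_C, h1, h2]
    ring
  rw [this]; ring

theorem hk_psd (k : ℕ) (c : ℕ → ℝ) (h0 : 0 < c 0)
    (hc : ∀ j < k / 2, c (j + 1) * (2 * (j + 1) * (2 * k - 2 * j + 1)) =
      - (c j * ((k - 2 * j) * (k - 2 * j - 1)))) {ι : Type*} (S : Finset ι) (φ : ι → Fin 5 → ℝ)
    (f : ι → ℝ) :
    0 ≤ ∑ a ∈ S, ∑ b ∈ S, f a * f b * hk k c (dt (φ a) (φ b)) (nsq (φ a) * nsq (φ b)) := by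
  have h := fis_self_nonneg (∑ a ∈ S, f a • zon k c (φ a))
  have e : fis (∑ a ∈ S, f a • zon k c (φ a)) (∑ a ∈ S, f a • zon k c (φ a)) =
      c 0 * k.factorial *
      ∑ a ∈ S, ∑ b ∈ S, f a * f b * hk k c (dt (φ a) (φ b)) (nsq (φ a) * nsq (φ b)) := by
    rw [map_sum, Finset.mul_sum]
    refine Finset.sum_congr rfl fun a _ => ?_
    rw [map_smul, fis_symm, map_sum, Finset.mul_sum, smul_eq_mul, Finset.mul_sum]
    refine Finset.sum_congr rfl fun b _ => ?_
    rw [map_smul, fis_symm, fis_zon k c hc, smul_eq_mul]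
    ring
  rw [e] at h
  exact nonneg_of_mul_nonneg_right h (by positivity)

end Fischer

section Geometry
open PE

theorem data_ok : ∀ q ∈ dataK, q.2.1.length = q.1 / 2 + 1 ∧ 0 < q.2.1.getD 0 0 ∧
    ∀ j < q.1 / 2, q.2.1.getD (j + 1) 0 * (2 * ((j : ℤ) + 1) * (2 * (q.1 : ℤ) - 2 * (j : ℤ) + 1)) =
      - (q.2.1.getD j 0 * (((q.1 : ℤ) - 2 * (j : ℤ)) * ((q.1 : ℤ) - 2 * (j : ℤ) - 1))) := by
  decide +kernel

theorem exists_proj (x : EuclideanSpace ℝ (Fin 6)) (hx : ‖x‖ = 1) :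
    ∃ φ : EuclideanSpace ℝ (Fin 6) → Fin 5 → ℝ, ∀ y z,
      dt (φ y) (φ z) = inner ℝ y z - inner ℝ x y * inner ℝ x z := by
  have hx0 : x ≠ 0 := by
    intro h; rw [h, norm_zero] at hx; norm_num at hx
  haveI : Fact (Module.finrank ℝ (EuclideanSpace ℝ (Fin 6)) = 5 + 1) := ⟨by simp⟩
  have hfin : Module.finrank ℝ (Submodule.span ℝ {x})ᗮ = 5 :=
    Submodule.finrank_orthogonal_span_singleton hx0
  let b : OrthonormalBasis (Fin 5) ℝ (Submodule.span ℝ {x})ᗮ :=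
    (stdOrthonormalBasis ℝ _).reindex (finCongr hfin)
  have hmem : ∀ y, y - (inner ℝ x y : ℝ) • x ∈ (Submodule.span ℝ {x})ᗮ := by
    intro y
    rw [Submodule.mem_orthogonal_singleton_iff_inner_right, inner_sub_right, inner_smul_right,
      real_inner_self_eq_norm_sq, hx]
    ring
  let p : EuclideanSpace ℝ (Fin 6) → (Submodule.span ℝ {x})ᗮ := fun y => ⟨_, hmem y⟩
  refine ⟨fun y i => inner ℝ (b i) (p y), fun y z => ?_⟩
  have h1 : dt (fun i => inner ℝ (b i) (p y)) (fun i => inner ℝ (b i) (p z)) = inner ℝ (p y) (p z) := by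
    rw [← b.sum_inner_mul_inner (p y) (p z), dt]
    refine Finset.sum_congr rfl fun i _ => ?_
    rw [real_inner_comm]
  rw [h1, Submodule.coe_inner]
  simp only [p]
  rw [inner_sub_left, inner_sub_right, inner_sub_right, inner_smul_left, inner_smul_right,
    inner_smul_right, inner_smul_left, real_inner_self_eq_norm_sq, hx, real_inner_comm x y]
  simp

theorem kA_psd (S : Finset (EuclideanSpace ℝ (Fin 6))) (hS : ∀ y ∈ S, ‖y‖ = 1)
    (x : EuclideanSpace ℝ (Fin 6)) (hx : ‖x‖ = 1) :
    0 ≤ ∑ y ∈ S, ∑ z ∈ S, kA dataK (inner ℝ x y) (inner ℝ x z) (inner ℝ y z) := by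
  obtain ⟨φ, hφ⟩ := exists_proj x hx
  have hok := data_ok
  generalize dataK = D at hok
  induction D with
  | nil => simp [kA]
  | cons q D ih =>
    have ih' := ih fun q' hq' => hok q' (List.mem_cons_of_mem _ hq')
    obtain ⟨hlen, hpos, hrec⟩ := hok q List.mem_cons_self
    simp only [kA, List.map_cons, List.sum_cons, Finset.sum_add_distrib]
    refine add_nonneg ?_ ih'
    generalize q.2.2 = W
    induction W with
    | nil => simp
    | cons w W ihW =>
      simp only [List.map_cons, List.sum_cons, mul_add, Finset.sum_add_distrib]
      refine add_nonneg ?_ ihW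
      have := hk_psd q.1 (fun j => ((q.2.1.getD j 0 : ℤ) : ℝ)) (by exact_mod_cast hpos)
        (fun j hj => by have := hrec j hj; exact_mod_cast this) S φ (fun y => horA (inner ℝ x y) w)
      refine this.trans_eq ?_
      refine Finset.sum_congr rfl fun y hy => Finset.sum_congr rfl fun z hz => ?_
      have hn : ∀ y ∈ S, nsq (φ y) = 1 - inner ℝ x y * inner ℝ x y := by
        intro y hy
        have : nsq (φ y) = dt (φ y) (φ y) := rfl
        rw [this, hφ, real_inner_self_eq_norm_sq, hS y hy]
        ring
      rw [hn y hy, hn z hz, hφ, hA_eq, hlen]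
      simp only [hk]
      ring

/-- sum over triples of distinct points -/
noncomputable def trip (S : Finset (EuclideanSpace ℝ (Fin 6))) (f : ℝ → ℝ → ℝ → ℝ) : ℝ :=
  ∑ x ∈ S, ∑ y ∈ S.erase x, ∑ z ∈ (S.erase x).erase y, f (inner ℝ x y) (inner ℝ x z) (inner ℝ y z)

theorem trip_add (S : Finset (EuclideanSpace ℝ (Fin 6))) (f g : ℝ → ℝ → ℝ → ℝ) :
    trip S (fun a b d => f a b d + g a b d) = trip S f + trip S g := by
  simp only [trip, Finset.sum_add_distrib]

theorem trip_mul (S : Finset (EuclideanSpace ℝ (Fin 6))) (r : ℝ) (f : ℝ → ℝ → ℝ → ℝ) :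
    trip S (fun a b d => r * f a b d) = r * trip S f := by
  simp only [trip, Finset.mul_sum]

theorem trip_ite (S : Finset (EuclideanSpace ℝ (Fin 6))) (f : ℝ → ℝ → ℝ → ℝ) :
    trip S f = ∑ x ∈ S, ∑ y ∈ S, ∑ z ∈ S, if x ≠ y ∧ x ≠ z ∧ y ≠ z then
      f (inner ℝ x y) (inner ℝ x z) (inner ℝ y z) else 0 := by
  unfold trip
  refine Finset.sum_congr rfl fun x _ => ?_
  rw [← Finset.filter_ne, Finset.sum_filter]
  refine Finset.sum_congr rfl fun y _ => ?_
  split_ifs with h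
  · rw [← Finset.filter_ne, Finset.filter_filter, Finset.sum_filter]
    refine Finset.sum_congr rfl fun z _ => ?_
    simp [h]
  · simp [h]

theorem trip_swap1 (S : Finset (EuclideanSpace ℝ (Fin 6))) (f : ℝ → ℝ → ℝ → ℝ) :
    trip S (fun a b d => f b a d) = trip S f := by
  rw [trip_ite, trip_ite]
  refine Finset.sum_congr rfl fun x _ => ?_
  rw [Finset.sum_comm]
  refine Finset.sum_congr rfl fun y _ => Finset.sum_congr rfl fun z _ => ?_
  rw [real_inner_comm z y]
  exact if_congr (by grind) rfl rfl

theorem trip_swap2 (S : Finset (EuclideanSpace ℝ (Fin 6))) (f : ℝ → ℝ → ℝ → ℝ) :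
    trip S (fun a b d => f a d b) = trip S f := by
  rw [trip_ite, trip_ite, Finset.sum_comm]
  refine Finset.sum_congr rfl fun y _ => Finset.sum_congr rfl fun x _ => Finset.sum_congr rfl fun z _ => ?_
  rw [real_inner_comm x y]
  exact if_congr (by grind) rfl rfl

theorem trip_sym6 (S : Finset (EuclideanSpace ℝ (Fin 6))) (e : PE) :
    trip S (fun a b d => sym6 a b d e) = 6 * trip S (fun a b d => ev a b d e) := by
  simp only [sym6, trip_add]
  have h2 : trip S (fun a b d => ev a d b e) = trip S (fun a b d => ev a b d e) :=
    trip_swap2 S (fun a b d => ev a b d e)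
  have h3 : trip S (fun a b d => ev b a d e) = trip S (fun a b d => ev a b d e) :=
    trip_swap1 S (fun a b d => ev a b d e)
  have h4 : trip S (fun a b d => ev b d a e) = trip S (fun a b d => ev a b d e) :=
    (trip_swap1 S (fun a b d => ev a d b e)).trans h2
  have h5 : trip S (fun a b d => ev d a b e) = trip S (fun a b d => ev a b d e) :=
    (trip_swap2 S (fun a b d => ev b a d e)).trans h3
  have h6 : trip S (fun a b d => ev d b a e) = trip S (fun a b d => ev a b d e) :=
    (trip_swap1 S (fun a b d => ev d a b e)).trans h5
  rw [h2, h3, h4, h5, h6]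
  ring

theorem full_sum (S : Finset (EuclideanSpace ℝ (Fin 6))) (hS : ∀ y ∈ S, ‖y‖ = 1) (N : ℕ)
    (hN : S.card = N + 2) (k : ℝ → ℝ → ℝ → ℝ) :
    (N : ℝ) * (N + 1) * ∑ x ∈ S, ∑ y ∈ S, ∑ z ∈ S, k (inner ℝ x y) (inner ℝ x z) (inner ℝ y z) =
      N * (N + 1) * trip S k + (N + 1) * trip S (fun a _ _ => k a a 1 + (k 1 a a + k a 1 a))
        + trip S (fun _ _ _ => k 1 1 1) := by
  have h1 : ∀ y ∈ S, inner ℝ y y = (1 : ℝ) := by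
    intro y hy; rw [real_inner_self_eq_norm_sq, hS y hy]; norm_num
  have hx : ∀ x ∈ S, ∑ y ∈ S, ∑ z ∈ S, k (inner ℝ x y) (inner ℝ x z) (inner ℝ y z) =
      k 1 1 1 + ∑ y ∈ S.erase x, (k (inner ℝ x y) (inner ℝ x y) 1 + (k 1 (inner ℝ x y) (inner ℝ x y) +
        k (inner ℝ x y) 1 (inner ℝ x y))) +
      ∑ y ∈ S.erase x, ∑ z ∈ (S.erase x).erase y, k (inner ℝ x y) (inner ℝ x z) (inner ℝ y z) := by
    intro x hx
    rw [← Finset.add_sum_erase S _ hx, ← Finset.add_sum_erase S _ hx, h1 x hx]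
    have : ∀ y ∈ S.erase x, ∑ z ∈ S, k (inner ℝ x y) (inner ℝ x z) (inner ℝ y z) =
        k (inner ℝ x y) 1 (inner ℝ x y) + (k (inner ℝ x y) (inner ℝ x y) 1 +
        ∑ z ∈ (S.erase x).erase y, k (inner ℝ x y) (inner ℝ x z) (inner ℝ y z)) := by
      intro y hy
      rw [← Finset.add_sum_erase S _ hx, ← Finset.add_sum_erase (S.erase x) _ hy, h1 x hx,
        h1 y (Finset.mem_of_mem_erase hy), real_inner_comm x y]
    rw [Finset.sum_congr rfl this]
    simp only [Finset.sum_add_distrib]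
    ring
  rw [Finset.sum_congr rfl hx]
  simp only [Finset.sum_add_distrib, Finset.sum_const, hN]
  have hT1 : trip S (fun a _ _ => k a a 1 + (k 1 a a + k a 1 a)) =
      N * ∑ x ∈ S, ∑ y ∈ S.erase x, (k (inner ℝ x y) (inner ℝ x y) 1 + (k 1 (inner ℝ x y) (inner ℝ x y) +
        k (inner ℝ x y) 1 (inner ℝ x y))) := by
    unfold trip
    rw [Finset.mul_sum]
    refine Finset.sum_congr rfl fun x hx => ?_
    rw [Finset.mul_sum]
    refine Finset.sum_congr rfl fun y hy => ?_
    rw [Finset.sum_const, Finset.card_erase_of_mem hy, Finset.card_erase_of_mem hx, hN, nsmul_eq_mul]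
    simp
  have hT0 : trip S (fun _ _ _ => k 1 1 1) = (N + 2) * (N + 1) * N * k 1 1 1 := by
    unfold trip
    have : ∀ x ∈ S, ∑ y ∈ S.erase x, ∑ z ∈ (S.erase x).erase y, k 1 1 1 = (N + 1) * (N * k 1 1 1) := by
      intro x hx
      have : ∀ y ∈ S.erase x, ∑ z ∈ (S.erase x).erase y, k 1 1 1 = N * k 1 1 1 := by
        intro y hy
        rw [Finset.sum_const, Finset.card_erase_of_mem hy, Finset.card_erase_of_mem hx, hN, nsmul_eq_mul]
        simp
      rw [Finset.sum_congr rfl this, Finset.sum_const, Finset.card_erase_of_mem hx, hN, nsmul_eq_mul]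
      simp
    rw [Finset.sum_congr rfl this, Finset.sum_const, hN, nsmul_eq_mul]
    push_cast
    ring
  rw [hT1, hT0]
  simp only [trip, Finset.sum_add_distrib, nsmul_eq_mul]
  push_cast
  ring

theorem no79 (S : Finset (EuclideanSpace ℝ (Fin 6)))
    (hS : ∀ x ∈ S, ‖x‖ = 1)
    (hdist : ∀ x ∈ S, ∀ y ∈ S, x ≠ y → 1 ≤ dist x y) (hcard : S.card = 79) : False := by
  have hlo : ∀ x ∈ S, ∀ y ∈ S, |(inner ℝ x y : ℝ)| ≤ 1 := by
    intro x hx y hy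
    have := abs_real_inner_le_norm x y
    rwa [hS x hx, hS y hy, one_mul] at this
  have hhi : ∀ x ∈ S, ∀ y ∈ S, x ≠ y → (inner ℝ x y : ℝ) ≤ 1 / 2 := by
    intro x hx y hy hxy
    have h := hdist x hx y hy hxy
    rw [dist_eq_norm] at h
    have h2 := norm_sub_sq_real x y
    rw [hS x hx, hS y hy] at h2
    nlinarith
  have hk : 0 ≤ ∑ x ∈ S, ∑ y ∈ S, ∑ z ∈ S, kA dataK (inner ℝ x y) (inner ℝ x z) (inner ℝ y z) :=
    Finset.sum_nonneg fun x hx => kA_psd S hS x (hS x hx)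
  have hf := full_sum S hS 77 hcard (kA dataK)
  have hz : trip S (fun a b d => ev a b d mainE) = 0 := by
    have h := trip_sym6 S mainE
    have : (fun a b d : ℝ => sym6 a b d mainE) = fun _ _ _ => 0 := by
      funext a b d
      exact main_sym a b d
    rw [this] at h
    have h0 : trip S (fun _ _ _ => 0) = 0 := by simp [trip]
    rw [h0] at h
    linarith
  have he : (fun a b d : ℝ => ev a b d mainE) = fun a b d : ℝ =>
      6006 * kA dataK a b d + (78 * (kA dataK a a 1 + (kA dataK 1 a a + kA dataK a 1 a)) +
      (kA dataK 1 1 1 + (ev a b d (sosE dataS) + (dataC + ev a b d resE)))) := by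
    funext a b d
    simp only [mainE, ev, ev_kE, resE]
    norm_num
  rw [he] at hz
  simp only [trip_add, trip_mul] at hz hf
  have hpos : 0 < trip S (fun a b d => ev a b d (sosE dataS)) + (trip S (fun _ _ _ => dataC) +
      trip S (fun a b d => ev a b d resE)) := by
    rw [← trip_add, ← trip_add]
    unfold trip
    have hne : ∀ T : Finset (EuclideanSpace ℝ (Fin 6)), 0 < T.card → T.Nonempty :=
      fun T h => Finset.card_pos.mp h
    refine Finset.sum_pos (fun x hx => ?_) (hne _ (by omega))
    refine Finset.sum_pos (fun y hy => ?_) (hne _ (by rw [Finset.card_erase_of_mem hx]; omega))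
    refine Finset.sum_pos (fun z hz => ?_) (hne _ (by
      rw [Finset.card_erase_of_mem hy, Finset.card_erase_of_mem hx]; omega))
    have hy' := Finset.mem_of_mem_erase hy
    have hz' := Finset.mem_of_mem_erase (Finset.mem_of_mem_erase hz)
    have h1 := sos_nonneg (inner ℝ x y) (inner ℝ x z) (inner ℝ y z) (abs_le.mp (hlo x hx y hy')).1
      (hhi x hx y hy' (Finset.ne_of_mem_erase hy).symm) dataS
    have h2 := abs_ev_le _ _ _ (hlo x hx y hy') (hlo x hx z hz') (hlo y hy' z hz') resE
    have h3 := res_lt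
    have h4 := (abs_le.mp h2).1
    linarith
  push_cast at hf
  linarith

end Geometry

theorem kissing_number_dim6_le_78
    (S : Finset (EuclideanSpace ℝ (Fin 6)))
    (hnorm : ∀ x ∈ S, ‖x‖ = 1)
    (hdist : ∀ x ∈ S, ∀ y ∈ S, x ≠ y → 1 ≤ dist x y) :
    S.card ≤ 78 := by
  by_contra h
  obtain ⟨T, hT, hc⟩ := Finset.exists_subset_card_eq (show 79 ≤ S.card by omega)
  exact no79 T (fun x hx => hnorm x (hT hx)) (fun x hx y hy => hdist x (hT hx) y (hT hy)) hc
end
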